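/- Let W:𝔻̄→ℂ≅ℝ² be a C¹ vector field that is divergence free, tangent to the unit circle (Re(W(z)·z̄)=0 for all |z|=1), and vanishes only at the origin. Let ψ denote the flow of ∂_tψ(t,z)=W(ψ(t,z)), ψ(0,z)=z. Then: (1) for every z∈𝔻̄∖{0} the trajectory t↦ψ(t,z) is defined for all t∈ℝ and is periodic, and its orbit is a closed curve contained in 𝔻̄ enclosing a simply connected region containing the origin; (2) the maps ψ(t,·), t∈ℝ, form a one-parameter group of diffeomorphisms of the closed unit disc; (3) if in addition conj(W(z))=−W(z̄) for all z∈𝔻̄, then every orbit is symmetric with respect to the real axis; (4) if W(e^{iθ₀}z)=e^{iθ₀}W(z) for all z∈𝔻̄ and some θ₀∈ℝ, then every orbit is invariant under the rotation z↦e^{iθ₀}z. -/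

import Mathlib

open MeasureTheory Metric Set

/-!
A divergence-free field `W` on the disc is Hamiltonian: by the Poincaré lemma `i W = ∇H` for some
`H`. As `∇H` is normal to the unit circle and vanishes at the origin only, it points outwards along
the whole circle or inwards along the whole circle, so the gradient flow of `-H` or of `H` maps the
disc into itself, `H` is strictly monotone along its trajectories, and these all converge to `0`.
Hence a level set of `H` not through `0` is a continuous image of the circle, so connected, and is
the frontier of a sublevel set which the gradient flow contracts to `0`.

Near a point `p` with `W p ≠ 0` the pair `(H, ⟪W p, ·⟫)` is a local coordinate system in which
orbits of `W` cannot leave gaps in the level set, so each orbit is open in its level set, and being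
connected the level set is a single orbit. By compactness a trajectory comes back close to some
earlier point at a later time, and the same coordinates turn this into a period.

Differentiability of the time-`t` map comes from the first variation equation. A linear isometry
commuting with `i W` preserves `∇H`, hence `H`, hence its level sets, which are the orbits.
-/

open Filter Topology
open scoped NNReal RealInnerProductSpace

section GlobalFlow

variable {E : Type*} [NormedAddCommGroup E] [NormedSpace ℝ E] {F : E → E} {K M : ℝ≥0}
  {γ γ' : ℝ → E}

theorem isIntegralCurve_eq_of_lipschitzWith (hF : LipschitzWith K F)
    (hγ : IsIntegralCurve γ fun _ => F) (hγ' : IsIntegralCurve γ' fun _ => F)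
    (h₀ : γ 0 = γ' 0) : γ = γ' :=
  ODE_solution_unique_univ (s := fun _ => univ) (fun _ => hF.lipschitzOnWith)
    (fun t => ⟨hγ t, mem_univ _⟩) (fun t => ⟨hγ' t, mem_univ _⟩) h₀

theorem isIntegralCurve_dist_le_of_lipschitzWith (hF : LipschitzWith K F)
    (hγ : IsIntegralCurve γ fun _ => F) (hγ' : IsIntegralCurve γ' fun _ => F) {t : ℝ}
    (ht : 0 ≤ t) : dist (γ t) (γ' t) ≤ dist (γ 0) (γ' 0) * Real.exp (K * t) := by
  simpa using dist_le_of_trajectories_ODE (v := fun _ => F) (fun _ => hF)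
    hγ.continuous.continuousOn (fun s _ => (hγ s).hasDerivWithinAt)
    hγ'.continuous.continuousOn (fun s _ => (hγ' s).hasDerivWithinAt) le_rfl t ⟨ht, le_rfl⟩

theorem exists_hasDerivAt_Ioo_of_lipschitzWith_of_bounded [CompleteSpace E]
    (hF : LipschitzWith K F) (hM : ∀ x, ‖F x‖ ≤ M) (x : E) {T : ℝ} (hT : 0 < T) :
    ∃ γ : ℝ → E, γ 0 = x ∧ ∀ t ∈ Ioo (-T) T, HasDerivAt γ (F (γ t)) t := by
  lift T to ℝ≥0 using hT.le
  have hPL : IsPicardLindelof (fun _ : ℝ => F) (tmin := -T) (tmax := T)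
      ⟨0, by simp⟩ x (M * T) 0 M K :=
    .of_time_independent (fun y _ => hM y) hF.lipschitzOnWith (by simp)
  obtain ⟨γ, hγ₀, hγ⟩ := hPL.exists_eq_forall_mem_Icc_hasDerivWithinAt₀
  exact ⟨γ, hγ₀, fun t ht =>
    (hγ t (Ioo_subset_Icc_self ht)).hasDerivAt (Icc_mem_nhds ht.1 ht.2)⟩

theorem exists_isIntegralCurve_of_lipschitzWith_of_bounded [CompleteSpace E]
    (hF : LipschitzWith K F) (hM : ∀ x, ‖F x‖ ≤ M) (x : E) :
    ∃ γ : ℝ → E, γ 0 = x ∧ IsIntegralCurve γ fun _ => F := by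
  have key (T : ℝ) (hT : 0 < T) := exists_hasDerivAt_Ioo_of_lipschitzWith_of_bounded hF hM x hT
  choose! γ hγ₀ hγ using key
  have consistent {S T t : ℝ} (hS : t ∈ Ioo (-S) S) (hT : t ∈ Ioo (-T) T) : γ S t = γ T t := by
    have hS₀ : 0 < S := by linarith [hS.1, hS.2]
    have hT₀ : 0 < T := by linarith [hT.1, hT.2]
    have sub {R : ℝ} (hR : min S T ≤ R) : Ioo (-min S T) (min S T) ⊆ Ioo (-R) R :=
      Ioo_subset_Ioo (neg_le_neg hR) hR
    refine ODE_solution_unique_of_mem_Ioo (v := fun _ => F) (s := fun _ => univ) (t₀ := 0)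
      (a := -min S T) (b := min S T) (fun _ _ => hF.lipschitzOnWith) (by simp [hS₀, hT₀])
      (fun s hs => ⟨hγ S hS₀ s (sub (min_le_left S T) hs), mem_univ _⟩)
      (fun s hs => ⟨hγ T hT₀ s (sub (min_le_right S T) hs), mem_univ _⟩)
      (by rw [hγ₀ S hS₀, hγ₀ T hT₀]) ?_
    rw [mem_Ioo, ← abs_lt] at *
    exact lt_min hS hT
  have mem_Ioo_self (t : ℝ) : t ∈ Ioo (-(|t| + 1)) (|t| + 1) := abs_lt.1 (lt_add_one _)
  refine ⟨fun t => γ (|t| + 1) t, hγ₀ _ (by positivity), fun t => ?_⟩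
  refine (hγ (|t| + 1) (by positivity) t (mem_Ioo_self t)).congr_of_eventuallyEq ?_
  filter_upwards [isOpen_Ioo.mem_nhds (mem_Ioo_self t)] with s hs
  exact consistent (mem_Ioo_self s) hs

/-- `φ` is a flow along the vector field `F` in `s`: a trajectory has velocity `F` at every time
at which it is in `s`. What happens outside `s` is left open, so that a vector field given on `s`
only may be extended at will; that trajectories stay in `s` is stated by `IsInvariant φ s` or
`IsForwardInvariant φ s`. -/
def IsFlowAlong (φ : Flow ℝ E) (F : E → E) (s : Set E) : Prop :=
  ∀ x t, φ t x ∈ s → HasDerivAt (φ · x) (F (φ t x)) t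

variable {φ : Flow ℝ E} {s : Set E}

theorem IsFlowAlong.reverse (h : IsFlowAlong φ F s) : IsFlowAlong φ.reverse (-F) s := by
  intro x t ht
  simpa [Function.comp_def] using! (h x (-t) ht).scomp t (hasDerivAt_neg t)

theorem exists_isFlowAlong_of_lipschitzWith_of_bounded [CompleteSpace E]
    (hF : LipschitzWith K F) (hM : ∀ x, ‖F x‖ ≤ M) :
    ∃ φ : Flow ℝ E, IsFlowAlong φ F univ := by
  choose γ hγ₀ hγ using exists_isIntegralCurve_of_lipschitzWith_of_bounded hF hM
  have hγ_neg (x : E) : IsIntegralCurve (fun t => γ x (-t)) fun _ => -F := fun t => by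
    simpa [Function.comp_def] using! (hγ x (-t)).scomp t (hasDerivAt_neg t)
  have lipschitz_time (x : E) : LipschitzWith M (γ x) :=
    lipschitzWith_of_nnnorm_deriv_le (fun t => (hγ x t).differentiableAt) fun t => by
      rw [(hγ x t).deriv]
      exact hM _
  have continuous_space (t : ℝ) : Continuous fun x => γ x t := by
    refine (LipschitzWith.of_dist_le_mul (K := (Real.exp (K * |t|)).toNNReal)
      fun x y => ?_).continuous
    rw [Real.coe_toNNReal _ (Real.exp_pos _).le, mul_comm]
    rcases le_total 0 t with ht | ht
    · simpa only [hγ₀, abs_of_nonneg ht]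
        using isIntegralCurve_dist_le_of_lipschitzWith hF (hγ x) (hγ y) ht
    · simpa only [hγ₀, abs_of_nonpos ht, neg_zero, neg_neg]
        using isIntegralCurve_dist_le_of_lipschitzWith hF.neg (hγ_neg x) (hγ_neg y)
          (neg_nonneg.2 ht)
  have group_law (s t : ℝ) (x : E) : γ x (s + t) = γ (γ x t) s :=
    congrFun (isIntegralCurve_eq_of_lipschitzWith hF ((hγ x).comp_add t) (hγ (γ x t))
      (by simp [hγ₀])) s
  exact ⟨⟨fun t x => γ x t,
    (continuous_prod_of_continuous_lipschitzWith' (fun p : E × ℝ => γ p.1 p.2)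
      M lipschitz_time continuous_space).comp continuous_swap, group_law, hγ₀⟩,
    fun x t _ => hγ x t⟩

theorem IsFlowAlong.dist_le (h : IsFlowAlong φ F s) (hs : IsForwardInvariant φ s)
    (hF : LipschitzOnWith K F s) {x y : E} (hx : x ∈ s) (hy : y ∈ s) {t : ℝ} (ht : 0 ≤ t) :
    dist (φ t x) (φ t y) ≤ dist x y * Real.exp (K * t) := by
  simpa only [sub_zero] using dist_le_of_trajectories_ODE_of_mem (v := fun _ => F)
    (s := fun _ => s) (f := (φ · x)) (g := (φ · y)) (fun _ _ => hF) (by fun_prop)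
    (fun τ hτ => (h x τ (hs hτ.1 hx)).hasDerivWithinAt) (fun τ hτ => hs hτ.1 hx) (by fun_prop)
    (fun τ hτ => (h y τ (hs hτ.1 hy)).hasDerivWithinAt) (fun τ hτ => hs hτ.1 hy)
    (by simp only [φ.map_zero_apply, le_refl]) t ⟨ht, le_rfl⟩

theorem IsFlowAlong.apply_eq_self_of_eq_zero (h : IsFlowAlong φ F s) (hs : IsForwardInvariant φ s)
    (hF : LipschitzOnWith K F s) {x : E} (hx : x ∈ s) (hFx : F x = 0) (t : ℝ) : φ t x = x := by
  have of_nonneg {t : ℝ} (ht : 0 ≤ t) : φ t x = x :=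
    ODE_solution_unique_of_mem_Icc_right (v := fun _ => F) (s := fun _ => s) (f := (φ · x))
      (g := fun _ => x) (fun _ _ => hF) (by fun_prop)
      (fun τ hτ => (h x τ (hs hτ.1 hx)).hasDerivWithinAt) (fun τ hτ => hs hτ.1 hx) (by fun_prop)
      (fun τ _ => by simpa only [hFx] using hasDerivWithinAt_const τ _ x) (fun _ _ => hx)
      (φ.map_zero_apply x) ⟨ht, le_rfl⟩
  rcases le_total 0 t with ht | ht
  · exact of_nonneg ht
  · calc φ t x = φ t (φ (-t) x) := by rw [of_nonneg (neg_nonneg.2 ht)]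
      _ = x := by rw [← φ.map_add, add_neg_cancel, φ.map_zero_apply]

end GlobalFlow

section UnitBallRetraction

variable {E : Type*} [NormedAddCommGroup E] [NormedSpace ℝ E]

/-- The radial retraction of a normed space onto its closed unit ball. Precomposition with it
extends a Lipschitz vector field on the unit ball to a bounded Lipschitz vector field on the whole
space. -/
noncomputable def unitBallRetraction (x : E) : E :=
  (max 1 ‖x‖)⁻¹ • x

theorem unitBallRetraction_of_mem {x : E} (hx : x ∈ closedBall (0 : E) 1) :
    unitBallRetraction x = x := by
  rw [unitBallRetraction, max_eq_left (mem_closedBall_zero_iff.1 hx), inv_one, one_smul]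

theorem unitBallRetraction_mem (x : E) : unitBallRetraction x ∈ closedBall (0 : E) 1 := by
  rw [mem_closedBall_zero_iff, unitBallRetraction, norm_smul, norm_inv,
    Real.norm_of_nonneg (by positivity), inv_mul_le_one₀ (by positivity)]
  exact le_max_right _ _

theorem lipschitzWith_unitBallRetraction : LipschitzWith 2 (unitBallRetraction : E → E) := by
  refine LipschitzWith.of_dist_le_mul fun x y => ?_
  simp only [dist_eq_norm, unitBallRetraction]
  set a := max 1 ‖x‖
  set b := max 1 ‖y‖
  have ha : 1 ≤ a := le_max_left _ _
  have hb : 1 ≤ b := le_max_left _ _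
  have hab : |b - a| ≤ ‖x - y‖ :=
    calc |b - a| ≤ |‖y‖ - ‖x‖| := by simpa using abs_max_sub_max_le_max 1 ‖y‖ 1 ‖x‖
      _ ≤ ‖x - y‖ := norm_sub_rev x y ▸ abs_norm_sub_norm_le y x
  have hby : b⁻¹ * ‖y‖ ≤ 1 := (inv_mul_le_one₀ (by positivity)).2 (le_max_right _ _)
  have split : a⁻¹ • x - b⁻¹ • y = a⁻¹ • ((x - y) + (b - a) • b⁻¹ • y) := by
    match_scalars <;> field_simp; ring
  calc ‖a⁻¹ • x - b⁻¹ • y‖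
      = a⁻¹ * ‖(x - y) + (b - a) • b⁻¹ • y‖ := by
        rw [split, norm_smul, norm_inv, Real.norm_of_nonneg (by positivity)]
    _ ≤ ‖(x - y) + (b - a) • b⁻¹ • y‖ :=
        mul_le_of_le_one_left (norm_nonneg _) (inv_le_one_of_one_le₀ ha)
    _ ≤ ‖x - y‖ + |b - a| * (b⁻¹ * ‖y‖) := by
        grw [norm_add_le, norm_smul, norm_smul, norm_inv, Real.norm_eq_abs,
          Real.norm_of_nonneg (by positivity : 0 ≤ b)]
    _ ≤ ‖x - y‖ + ‖x - y‖ * 1 := by gcongr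
    _ = (2 : ℝ≥0) * ‖x - y‖ := by push_cast; ring

end UnitBallRetraction

section UnitBallFlow

variable {E : Type*} [NormedAddCommGroup E] [InnerProductSpace ℝ E] {F : E → E} {K : ℝ≥0}
  {φ : Flow ℝ E}

theorem norm_le_of_inner_deriv_nonpos {γ γ' : ℝ → E} {r : ℝ} (hγ : ∀ t, HasDerivAt γ (γ' t) t)
    (h₀ : ‖γ 0‖ ≤ r) (hout : ∀ t, r ≤ ‖γ t‖ → ⟪γ t, γ' t⟫ ≤ 0) {t : ℝ} (ht : 0 ≤ t) :
    ‖γ t‖ ≤ r := by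
  have hr : 0 ≤ r := (norm_nonneg _).trans h₀
  have barrier (ε : ℝ) (hε : 0 < ε) : ‖γ t‖ ^ 2 ≤ r ^ 2 + ε * t := by
    refine image_le_of_deriv_right_lt_deriv_boundary' (a := 0) (f := fun s => ‖γ s‖ ^ 2)
      (B := fun s => r ^ 2 + ε * s)
      (fun s _ => (hγ s).norm_sq.continuousAt.continuousWithinAt)
      (fun s _ => (hγ s).norm_sq.hasDerivWithinAt)
      (by simpa using! pow_le_pow_left₀ (norm_nonneg _) h₀ 2) (by fun_prop)
      (fun s _ => ((hasDerivAt_const_mul ε).const_add _).hasDerivWithinAt)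
      (fun s hs hsB => ?_) ⟨ht, le_rfl⟩
    have : r ≤ ‖γ s‖ := le_of_sq_le_sq (by nlinarith [hs.1]) (norm_nonneg _)
    linarith [hout s this]
  refine le_of_sq_le_sq (le_of_forall_pos_le_add fun δ hδ => ?_) hr
  refine (barrier (δ / (t + 1)) (by positivity)).trans ?_
  gcongr
  rw [div_mul_eq_mul_div, div_le_iff₀ (by positivity)]
  nlinarith

theorem IsFlowAlong.of_comp_unitBallRetraction
    (h : IsFlowAlong φ (F ∘ unitBallRetraction) univ) : IsFlowAlong φ F (closedBall 0 1) := by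
  intro x t hx
  simpa only [Function.comp_apply, unitBallRetraction_of_mem hx] using! h x t (mem_univ _)

theorem IsFlowAlong.isForwardInvariant_unitBall
    (h : IsFlowAlong φ (F ∘ unitBallRetraction) univ)
    (hF : ∀ x ∈ sphere (0 : E) 1, ⟪x, F x⟫ ≤ 0) : IsForwardInvariant φ (closedBall 0 1) := by
  intro t ht x hx
  rw [mem_closedBall_zero_iff] at hx ⊢
  refine norm_le_of_inner_deriv_nonpos (γ := (φ · x)) (fun s => h x s (mem_univ _))
    (by rwa [φ.map_zero_apply]) (fun s hs => ?_) ht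
  set y := φ s x
  have hy : 0 < ‖y‖ := one_pos.trans_le hs
  have hyr : unitBallRetraction y = ‖y‖⁻¹ • y := by rw [unitBallRetraction, max_eq_right hs]
  have on_sphere := hF (‖y‖⁻¹ • y) (by simp [norm_smul, hy.ne'])
  rw [real_inner_smul_left] at on_sphere
  rw [Function.comp_apply, hyr]
  exact nonpos_of_mul_nonpos_right on_sphere (inv_pos.2 hy)

theorem exists_isFlowAlong_comp_unitBallRetraction [CompleteSpace E]
    (hF : LipschitzOnWith K F (closedBall 0 1)) :
    ∃ φ : Flow ℝ E, IsFlowAlong φ (F ∘ unitBallRetraction) univ := by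
  have hF' : LipschitzWith (K * 2) (F ∘ unitBallRetraction) :=
    lipschitzOnWith_univ.1 (hF.comp lipschitzWith_unitBallRetraction.lipschitzOnWith
      fun x _ => unitBallRetraction_mem x)
  refine exists_isFlowAlong_of_lipschitzWith_of_bounded hF' (M := ‖F 0‖₊ + K) fun x => ?_
  have hx := unitBallRetraction_mem x
  calc ‖F (unitBallRetraction x)‖
      ≤ ‖F 0‖ + ‖F (unitBallRetraction x) - F 0‖ := norm_le_norm_add_norm_sub' _ _
    _ ≤ ‖F 0‖ + K * ‖unitBallRetraction x - 0‖ := by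
        grw [hF.norm_sub_le hx (mem_closedBall_self zero_le_one)]
    _ ≤ ‖F 0‖ + K := by
        rw [sub_zero]
        grw [mem_closedBall_zero_iff.1 hx, mul_one]

theorem exists_isFlowAlong_isForwardInvariant_unitBall [CompleteSpace E]
    (hF : LipschitzOnWith K F (closedBall 0 1)) (hin : ∀ x ∈ sphere (0 : E) 1, ⟪x, F x⟫ ≤ 0) :
    ∃ φ : Flow ℝ E, IsFlowAlong φ F (closedBall 0 1) ∧ IsForwardInvariant φ (closedBall 0 1) := by
  obtain ⟨φ, hφ⟩ := exists_isFlowAlong_comp_unitBallRetraction hF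
  exact ⟨φ, hφ.of_comp_unitBallRetraction, hφ.isForwardInvariant_unitBall hin⟩

theorem exists_isFlowAlong_isInvariant_unitBall [CompleteSpace E]
    (hF : LipschitzOnWith K F (closedBall 0 1)) (htan : ∀ x ∈ sphere (0 : E) 1, ⟪x, F x⟫ = 0) :
    ∃ φ : Flow ℝ E, IsFlowAlong φ F (closedBall 0 1) ∧ IsInvariant φ (closedBall 0 1) := by
  obtain ⟨φ, hφ⟩ := exists_isFlowAlong_comp_unitBallRetraction hF
  refine ⟨φ, hφ.of_comp_unitBallRetraction, fun t => ?_⟩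
  rcases le_total 0 t with ht | ht
  · exact hφ.isForwardInvariant_unitBall (fun x hx => (htan x hx).le) ht
  · have hrev := hφ.reverse.isForwardInvariant_unitBall (F := -F) (fun x hx => by
      simp [htan x hx]) (neg_nonneg.2 ht)
    rwa [show φ.reverse (-t) = φ t from congrArg φ (neg_neg t)] at hrev

end UnitBallFlow

section FirstVariation

variable {E : Type*} [NormedAddCommGroup E] [NormedSpace ℝ E]

theorem exp_mul_le_two {N : ℝ≥0} {t T : ℝ} (hNT : N * T ≤ 1 / 2) (htT : t ≤ T) :
    Real.exp (N * t) ≤ 2 := by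
  have hexp : Real.exp (1 / 2) * Real.exp (1 / 2) ≤ 3 := by
    rw [← Real.exp_add, add_halves]
    exact Real.exp_one_lt_three.le
  have : Real.exp (N * t) ≤ Real.exp (1 / 2) :=
    Real.exp_le_exp.2 ((mul_le_mul_of_nonneg_left htT N.2).trans hNT)
  nlinarith [Real.exp_pos (1 / 2)]

theorem norm_le_of_norm_deriv_right_le_mul_add {f f' : ℝ → E} {N : ℝ≥0} {T ε : ℝ} (hN : 1 ≤ N)
    (hNT : N * T ≤ 1 / 2) (hε : 0 ≤ ε) (hf : ContinuousOn f (Icc 0 T))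
    (hf' : ∀ t ∈ Ico 0 T, HasDerivWithinAt f (f' t) (Ici t) t) (hf₀ : f 0 = 0)
    (bound : ∀ t ∈ Ico 0 T, ‖f' t‖ ≤ N * ‖f t‖ + ε) {t : ℝ} (ht : t ∈ Icc 0 T) : ‖f t‖ ≤ ε := by
  have hN₁ : (1 : ℝ) ≤ N := hN
  have hgronwall := norm_le_gronwallBound_of_norm_deriv_right_le hf hf'
    (δ := 0) (by rw [hf₀, norm_zero]) bound t ht
  simp only [gronwallBound_of_K_ne_0 (zero_lt_one.trans_le hN₁).ne', zero_mul, zero_add,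
    sub_zero] at hgronwall
  calc ‖f t‖ ≤ ε / N * (Real.exp (N * t) - 1) := hgronwall
    _ ≤ ε / N * 1 := by gcongr; linarith [exp_mul_le_two hNT ht.2]
    _ ≤ ε := by rw [mul_one]; exact div_le_self hε hN₁

theorem exists_fundamentalSolution [CompleteSpace E] {A : ℝ → E →L[ℝ] E} {N : ℝ≥0} {T : ℝ}
    (hT : 0 ≤ T) (hNT : N * T ≤ 1 / 2) (hA : ContinuousOn A (Icc 0 T))
    (hAN : ∀ t ∈ Icc 0 T, ‖A t‖ ≤ N) :
    ∃ Y : ℝ → E →L[ℝ] E, Y 0 = .id ℝ E ∧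
      ∀ t ∈ Icc 0 T, HasDerivWithinAt Y ((A t).comp (Y t)) (Icc 0 T) t := by
  have norm_comp_le {t : ℝ} (ht : t ∈ Icc 0 T) (B : E →L[ℝ] E) : ‖(A t).comp B‖ ≤ N * ‖B‖ :=
    (ContinuousLinearMap.opNorm_comp_le _ _).trans (by gcongr; exact hAN t ht)
  have hPL : IsPicardLindelof (fun t (B : E →L[ℝ] E) => (A t).comp B) (tmin := 0) (tmax := T)
      ⟨0, le_rfl, hT⟩ (.id ℝ E) 1 0 (2 * N) N := by
    refine ⟨fun t ht => (LipschitzWith.of_dist_le_mul fun B C => ?_).lipschitzOnWith,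
      fun B _ => hA.clm_comp continuousOn_const, fun t ht B hB => ?_, ?_⟩
    · simpa only [dist_eq_norm, ContinuousLinearMap.comp_sub] using norm_comp_le ht (B - C)
    · have hB₂ : ‖B‖ ≤ 2 := by
        have hBid : ‖B - .id ℝ E‖ ≤ 1 := by simpa [dist_eq_norm] using hB
        linarith [norm_le_norm_sub_add B (.id ℝ E),
          ContinuousLinearMap.norm_id_le (𝕜 := ℝ) (E := E)]
      calc ‖(A t).comp B‖ ≤ N * ‖B‖ := norm_comp_le ht B
        _ ≤ N * 2 := by gcongr
        _ = (2 * N : ℝ≥0) := by push_cast; ring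
    · simp only [sub_zero, sub_self, max_eq_left hT, NNReal.coe_mul, NNReal.coe_ofNat,
        NNReal.coe_one, NNReal.coe_zero]
      linarith
  exact hPL.exists_eq_forall_mem_Icc_hasDerivWithinAt₀

variable {F : E → E} {F' : E → E →L[ℝ] E} {s : Set E} {φ : Flow ℝ E} {N : ℝ≥0} {T : ℝ}
  {Y : E → ℝ → E →L[ℝ] E}

/-- `Y x` solves, on the time interval `[0, T]`, the first variation equation
`∂ₜ Y = F'(φ t x) ∘ Y`, `Y x 0 = id`, along the trajectory of each point `x` of `s`. For a flow
along `F`, and `F'` the derivative of `F`, this makes `Y x t` the derivative of `φ t` at `x`. -/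
structure IsFirstVariation (φ : Flow ℝ E) (F' : E → E →L[ℝ] E) (s : Set E) (T : ℝ)
    (Y : E → ℝ → E →L[ℝ] E) : Prop where
  apply_zero : ∀ x ∈ s, Y x 0 = .id ℝ E
  hasDerivWithinAt : ∀ x ∈ s, ∀ t ∈ Icc 0 T,
    HasDerivWithinAt (Y x) ((F' (φ t x)).comp (Y x t)) (Icc 0 T) t

theorem exists_isFirstVariation [CompleteSpace E] (hs : IsForwardInvariant φ s)
    (hF' : ContinuousOn F' s) (hN : ∀ x ∈ s, ‖F' x‖ ≤ N) (hT : 0 ≤ T) (hNT : N * T ≤ 1 / 2) :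
    ∃ Y, IsFirstVariation φ F' s T Y := by
  have key (x : E) (hx : x ∈ s) := exists_fundamentalSolution (A := fun t => F' (φ t x)) hT hNT
    (hF'.comp (by fun_prop) fun t ht => hs ht.1 hx) fun t ht => hN _ (hs ht.1 hx)
  choose! Y hY₀ hY using key
  exact ⟨Y, hY₀, hY⟩

namespace IsFirstVariation

theorem continuousOn_time (hY : IsFirstVariation φ F' s T Y) {x : E} (hx : x ∈ s) :
    ContinuousOn (Y x) (Icc 0 T) :=
  fun t ht => (hY.hasDerivWithinAt x hx t ht).continuousWithinAt

theorem hasDerivWithinAt_Ici (hY : IsFirstVariation φ F' s T Y) {x : E} (hx : x ∈ s) {t : ℝ}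
    (ht : t ∈ Ico 0 T) : HasDerivWithinAt (Y x) ((F' (φ t x)).comp (Y x t)) (Ici t) t :=
  (hY.hasDerivWithinAt x hx t (Ico_subset_Icc_self ht)).mono_of_mem_nhdsWithin
    (Icc_mem_nhdsGE_of_mem ht)

theorem norm_le_two (hY : IsFirstVariation φ F' s T Y) (hs : IsForwardInvariant φ s)
    (hN : ∀ x ∈ s, ‖F' x‖ ≤ N) (hNT : N * T ≤ 1 / 2) {x : E} (hx : x ∈ s) {t : ℝ}
    (ht : t ∈ Icc 0 T) : ‖Y x t‖ ≤ 2 := by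
  have hgronwall := norm_le_gronwallBound_of_norm_deriv_right_le (K := N) (ε := 0) (δ := 1)
    (hY.continuousOn_time hx) (fun τ hτ => hY.hasDerivWithinAt_Ici hx hτ)
    (by rw [hY.apply_zero x hx]; exact ContinuousLinearMap.norm_id_le)
    (fun τ hτ => by
      rw [add_zero]
      exact (ContinuousLinearMap.opNorm_comp_le _ _).trans
        (by gcongr; exact hN _ (hs hτ.1 hx))) t ht
  rw [gronwallBound_ε0, one_mul, sub_zero] at hgronwall
  exact hgronwall.trans (exp_mul_le_two hNT ht.2)

end IsFirstVariation

theorem exists_forall_norm_sub_le_of_isCompact_of_convex (hs : IsCompact s)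
    (hs' : Convex ℝ s) (hF : ∀ x ∈ s, HasFDerivWithinAt F (F' x) s x) (hF' : ContinuousOn F' s)
    {ε : ℝ} (hε : 0 < ε) :
    ∃ δ > 0, ∀ x ∈ s, ∀ y ∈ s, ‖y - x‖ < δ →
      ‖F y - F x - F' x (y - x)‖ ≤ ε * ‖y - x‖ := by
  obtain ⟨δ, hδ, hunif⟩ :=
    uniformContinuousOn_iff.1 (hs.uniformContinuousOn_of_continuous hF') ε hε
  refine ⟨δ, hδ, fun x hx y hy hxy => ?_⟩
  rw [← dist_eq_norm] at hxy
  refine Convex.norm_image_sub_le_of_norm_hasFDerivWithin_le' (s := s ∩ ball x δ) (f' := F')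
    (fun z hz => (hF z hz.1).mono inter_subset_left) (fun z hz => ?_)
    (hs'.inter (convex_ball _ _)) ⟨hx, mem_ball_self hδ⟩ ⟨hy, hxy⟩
  simpa only [dist_eq_norm] using (hunif z hz.1 x hx hz.2).le

theorem IsFlowAlong.norm_sub_le_two_mul (h : IsFlowAlong φ F s) (hs : IsForwardInvariant φ s)
    (hF : LipschitzOnWith N F s) (hNT : N * T ≤ 1 / 2) {x y : E} (hx : x ∈ s) (hy : y ∈ s)
    {t : ℝ} (ht : t ∈ Icc 0 T) : ‖φ t y - φ t x‖ ≤ 2 * ‖y - x‖ := by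
  rw [← dist_eq_norm, ← dist_eq_norm, mul_comm]
  exact (h.dist_le hs hF hy hx ht.1).trans (by gcongr; exact exp_mul_le_two hNT ht.2)

theorem IsFirstVariation.hasFDerivWithinAt (hY : IsFirstVariation φ F' s T Y)
    (h : IsFlowAlong φ F s) (hs : IsForwardInvariant φ s) (hsc : IsCompact s) (hs' : Convex ℝ s)
    (hF : ∀ x ∈ s, HasFDerivWithinAt F (F' x) s x) (hF' : ContinuousOn F' s)
    (hN : ∀ x ∈ s, ‖F' x‖ ≤ N) (hN₁ : 1 ≤ N) (hNT : N * T ≤ 1 / 2) {t : ℝ} (ht : t ∈ Icc 0 T)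
    {x : E} (hx : x ∈ s) : HasFDerivWithinAt (φ t) (Y x t) s x := by
  have hlip : LipschitzOnWith N F s := hs'.lipschitzOnWith_of_nnnorm_hasFDerivWithin_le hF hN
  rw [hasFDerivWithinAt_iff_isLittleO, Asymptotics.isLittleO_iff]
  intro ε hε
  obtain ⟨δ, hδ, hunif⟩ :=
    exists_forall_norm_sub_le_of_isCompact_of_convex hsc hs' hF hF' (half_pos hε)
  filter_upwards [self_mem_nhdsWithin, mem_nhdsWithin_of_mem_nhds (ball_mem_nhds x (half_pos hδ))]
    with y hy hyδ
  rw [mem_ball, dist_eq_norm] at hyδ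
  refine norm_le_of_norm_deriv_right_le_mul_add (f := fun τ => φ τ y - φ τ x - Y x τ (y - x))
    (f' := fun τ => F (φ τ y) - F (φ τ x) - F' (φ τ x) (Y x τ (y - x))) hN₁ hNT (by positivity)
    (.sub (by fun_prop) ((hY.continuousOn_time hx).clm_apply continuousOn_const))
    (fun τ hτ => ?_) (by simp [hY.apply_zero x hx]) (fun τ hτ => ?_) ht
  · have hYτ := (hY.hasDerivWithinAt_Ici hx hτ).clm_apply (hasDerivWithinAt_const τ _ (y - x))
    exact ((h y τ (hs hτ.1 hy)).hasDerivWithinAt.sub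
      (h x τ (hs hτ.1 hx)).hasDerivWithinAt).sub (by simpa using hYτ)
  · have hφ := h.norm_sub_le_two_mul hs hlip hNT hx hy (Ico_subset_Icc_self hτ)
    calc ‖F (φ τ y) - F (φ τ x) - F' (φ τ x) (Y x τ (y - x))‖
        = ‖F' (φ τ x) (φ τ y - φ τ x - Y x τ (y - x)) +
            (F (φ τ y) - F (φ τ x) - F' (φ τ x) (φ τ y - φ τ x))‖ := by
          rw [map_sub (F' (φ τ x)) (φ τ y - φ τ x)]; congr 1; abel
      _ ≤ N * ‖φ τ y - φ τ x - Y x τ (y - x)‖ + ε / 2 * ‖φ τ y - φ τ x‖ :=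
          norm_add_le_of_le ((F' (φ τ x)).le_of_opNorm_le (hN _ (hs hτ.1 hx)) _)
            (hunif _ (hs hτ.1 hx) _ (hs hτ.1 hy) (by linarith))
      _ ≤ N * ‖φ τ y - φ τ x - Y x τ (y - x)‖ + ε * ‖y - x‖ := by nlinarith

theorem IsFirstVariation.continuousOn_space (hY : IsFirstVariation φ F' s T Y)
    (h : IsFlowAlong φ F s) (hs : IsForwardInvariant φ s) (hsc : IsCompact s)
    (hlip : LipschitzOnWith N F s) (hF' : ContinuousOn F' s) (hN : ∀ x ∈ s, ‖F' x‖ ≤ N)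
    (hN₁ : 1 ≤ N) (hNT : N * T ≤ 1 / 2) {t : ℝ} (ht : t ∈ Icc 0 T) :
    ContinuousOn (Y · t) s := by
  rw [Metric.continuousOn_iff]
  intro x hx ε hε
  obtain ⟨δ, hδ, hunif⟩ := uniformContinuousOn_iff.1
    (hsc.uniformContinuousOn_of_continuous hF') (ε / 4) (by positivity)
  refine ⟨δ / 2, half_pos hδ, fun y hy hyδ => ?_⟩
  rw [dist_eq_norm] at hyδ ⊢
  refine (half_lt_self hε).trans_le' <| norm_le_of_norm_deriv_right_le_mul_add
    (f := fun τ => Y y τ - Y x τ)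
    (f' := fun τ => (F' (φ τ y)).comp (Y y τ) - (F' (φ τ x)).comp (Y x τ)) hN₁ hNT (by positivity)
    ((hY.continuousOn_time hy).sub (hY.continuousOn_time hx))
    (fun τ hτ => (hY.hasDerivWithinAt_Ici hy hτ).sub (hY.hasDerivWithinAt_Ici hx hτ))
    (by rw [hY.apply_zero x hx, hY.apply_zero y hy, sub_self]) (fun τ hτ => ?_) ht
  have hτ' := Ico_subset_Icc_self hτ
  have hφ := h.norm_sub_le_two_mul hs hlip hNT hx hy hτ'
  have hF'_sub : ‖F' (φ τ y) - F' (φ τ x)‖ ≤ ε / 4 := by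
    rw [← dist_eq_norm]
    exact (hunif _ (hs hτ.1 hy) _ (hs hτ.1 hx) (by rw [dist_eq_norm]; linarith)).le
  calc ‖(F' (φ τ y)).comp (Y y τ) - (F' (φ τ x)).comp (Y x τ)‖
      = ‖(F' (φ τ x)).comp (Y y τ - Y x τ) + (F' (φ τ y) - F' (φ τ x)).comp (Y y τ)‖ := by
        rw [ContinuousLinearMap.sub_comp, ContinuousLinearMap.comp_sub]; congr 1; abel
    _ ≤ N * ‖Y y τ - Y x τ‖ + ε / 4 * 2 := by
        refine norm_add_le_of_le ((ContinuousLinearMap.opNorm_comp_le _ _).trans ?_)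
          ((ContinuousLinearMap.opNorm_comp_le _ _).trans ?_)
        · gcongr
          exact hN _ (hs hτ.1 hx)
        · gcongr
          exact hY.norm_le_two hs hN hNT hy hτ'
    _ = N * ‖Y y τ - Y x τ‖ + ε / 2 := by ring

end FirstVariation

section ContDiffFlow

variable {E : Type*} [NormedAddCommGroup E] [NormedSpace ℝ E] [CompleteSpace E] {F : E → E}
  {s : Set E} {φ : Flow ℝ E}

theorem IsFlowAlong.exists_forall_mem_Icc_contDiffOn_one (h : IsFlowAlong φ F s)
    (hs : IsForwardInvariant φ s) (hsc : IsCompact s) (hs' : Convex ℝ s)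
    (hsd : UniqueDiffOn ℝ s) (hF : ContDiffOn ℝ 1 F s) :
    ∃ T > 0, ∀ t ∈ Icc 0 T, ContDiffOn ℝ 1 (φ t) s := by
  have hF₁ : ∀ x ∈ s, HasFDerivWithinAt F (fderivWithin ℝ F s x) s x := fun x hx =>
    (hF.differentiableOn one_ne_zero x hx).hasFDerivWithinAt
  have hF' : ContinuousOn (fderivWithin ℝ F s) s := hF.continuousOn_fderivWithin hsd le_rfl
  obtain ⟨M, hM⟩ := hsc.exists_bound_of_continuousOn hF'
  set N : ℝ≥0 := max 1 M.toNNReal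
  have hN₁ : 1 ≤ N := le_max_left _ _
  have hN (x : E) (hx : x ∈ s) : ‖fderivWithin ℝ F s x‖ ≤ N :=
    (hM x hx).trans ((Real.le_coe_toNNReal M).trans (NNReal.coe_le_coe.2 (le_max_right _ _)))
  have hN_pos : (0 : ℝ) < N := zero_lt_one.trans_le hN₁
  set T : ℝ := 1 / 2 / N
  have hNT : N * T ≤ 1 / 2 := (mul_div_cancel₀ _ hN_pos.ne').le
  obtain ⟨Y, hY⟩ := exists_isFirstVariation hs hF' hN (by positivity) hNT
  refine ⟨T, by positivity, fun t ht => ?_⟩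
  have hφ' (x : E) (hx : x ∈ s) : HasFDerivWithinAt (φ t) (Y x t) s x :=
    hY.hasFDerivWithinAt h hs hsc hs' hF₁ hF' hN hN₁ hNT ht hx
  have hφ'_cont : ContinuousOn (fderivWithin ℝ (φ t) s) s :=
    (hY.continuousOn_space h hs hsc (hs'.lipschitzOnWith_of_nnnorm_hasFDerivWithin_le hF₁ hN) hF'
      hN hN₁ hNT ht).congr fun x hx => (hφ' x hx).fderivWithin (hsd x hx)
  exact (contDiffOn_succ_iff_fderivWithin (n := 0) hsd).2
    ⟨fun x hx => (hφ' x hx).differentiableWithinAt, by simp, contDiffOn_zero.2 hφ'_cont⟩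

theorem IsFlowAlong.contDiffOn_one_of_nonneg (h : IsFlowAlong φ F s)
    (hs : IsForwardInvariant φ s) (hsc : IsCompact s) (hs' : Convex ℝ s)
    (hsd : UniqueDiffOn ℝ s) (hF : ContDiffOn ℝ 1 F s) {t : ℝ} (ht : 0 ≤ t) :
    ContDiffOn ℝ 1 (φ t) s := by
  obtain ⟨T, hT, hsmall⟩ := h.exists_forall_mem_Icc_contDiffOn_one hs hsc hs' hsd hF
  obtain ⟨n, hn⟩ := exists_nat_ge (t / T)
  rw [div_le_iff₀ hT] at hn
  induction n generalizing t with
  | zero =>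
    rw [Nat.cast_zero, zero_mul] at hn
    exact hsmall t ⟨ht, hn.trans hT.le⟩
  | succ n ih =>
    rcases le_total t T with htT | hTt
    · exact hsmall t ⟨ht, htT⟩
    · have hsub : ContDiffOn ℝ 1 (φ (t - T)) s :=
        ih (by linarith) (by push_cast at hn; linarith)
      refine (hsub.comp (hsmall T ⟨hT.le, le_rfl⟩) fun x hx => hs hT.le hx).congr fun x _ => ?_
      rw [Function.comp_apply, ← φ.map_add, sub_add_cancel]

theorem IsFlowAlong.contDiffOn_one (h : IsFlowAlong φ F s) (hs : IsInvariant φ s)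
    (hsc : IsCompact s) (hs' : Convex ℝ s) (hsd : UniqueDiffOn ℝ s) (hF : ContDiffOn ℝ 1 F s)
    (t : ℝ) : ContDiffOn ℝ 1 (φ t) s := by
  rcases le_total 0 t with ht | ht
  · exact h.contDiffOn_one_of_nonneg hs.isForwardInvariant hsc hs' hsd hF ht
  · have hrev := h.reverse.contDiffOn_one_of_nonneg (fun τ _ => hs (-τ)) hsc hs' hsd hF.neg
      (neg_nonneg.2 ht)
    rwa [show φ.reverse (-t) = φ t from congrArg φ (neg_neg t)] at hrev

end ContDiffFlow

section DivergenceFree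

theorem divergence_fderivWithin_eq_zero_of_fderiv {W : ℂ → ℂ} {s : Set ℂ}
    (hW : ContDiffOn ℝ 1 W s) (hs : UniqueDiffOn ℝ s) (hs' : s ⊆ closure (interior s))
    (hdiv : ∀ z ∈ interior s, (fderiv ℝ W z 1).re + (fderiv ℝ W z Complex.I).im = 0) {z : ℂ}
    (hz : z ∈ s) :
    (fderivWithin ℝ W s z 1).re + (fderivWithin ℝ W s z Complex.I).im = 0 := by
  have hW' : ContinuousOn (fderivWithin ℝ W s) s := hW.continuousOn_fderivWithin hs le_rfl
  have hcont : ContinuousOn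
      (fun z => (fderivWithin ℝ W s z 1).re + (fderivWithin ℝ W s z Complex.I).im) s :=
    (Complex.continuous_re.comp_continuousOn (hW'.clm_apply continuousOn_const)).add
      (Complex.continuous_im.comp_continuousOn (hW'.clm_apply continuousOn_const))
  refine EqOn.of_subset_closure (s := interior s) (g := fun _ => 0) (fun w hw => ?_) hcont
    continuousOn_const interior_subset hs' hz
  simp only [fderivWithin_of_mem_nhds (mem_interior_iff_mem_nhds.1 hw), hdiv w hw]

theorem inner_I_mul_apply_comm_of_divergence_eq_zero {A : ℂ →L[ℝ] ℂ}
    (hA : (A 1).re + (A Complex.I).im = 0) (x y : ℂ) :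
    ⟪Complex.I * A x, y⟫ = ⟪Complex.I * A y, x⟫ := by
  have hA_apply (z : ℂ) : A z = z.re • A 1 + z.im • A Complex.I := by
    conv_lhs => rw [← Complex.re_add_im z]
    rw [map_add, ← A.map_smul, ← A.map_smul]
    simp
  rw [hA_apply x, hA_apply y]
  simp only [Complex.inner, Complex.mul_re, Complex.mul_im, Complex.add_re, Complex.add_im,
    Complex.real_smul, Complex.conj_re, Complex.conj_im, Complex.I_re, Complex.I_im,
    Complex.ofReal_re, Complex.ofReal_im]
  linear_combination (x.re * y.im - x.im * y.re) * hA

theorem inner_I_mul_self (w : ℂ) : ⟪Complex.I * w, w⟫ = 0 := by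
  simp only [Complex.inner, Complex.mul_re, Complex.mul_im, Complex.conj_re, Complex.conj_im,
    Complex.I_re, Complex.I_im]
  ring

theorem exists_hasGradientWithinAt_I_mul_of_divergence_eq_zero {W : ℂ → ℂ}
    {W' : ℂ → ℂ →L[ℝ] ℂ} {s : Set ℂ} (hs : Convex ℝ s)
    (hW : ∀ z ∈ s, HasFDerivWithinAt W (W' z) s z)
    (hdiv : ∀ z ∈ s, (W' z 1).re + (W' z Complex.I).im = 0) :
    ∃ H : ℂ → ℝ, ∀ z ∈ s, HasGradientWithinAt H (Complex.I * W z) s z := by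
  let Λ : ℂ →L[ℝ] StrongDual ℝ ℂ := (innerSL ℝ).comp (ContinuousLinearMap.mul ℝ ℂ Complex.I)
  obtain ⟨H, hH⟩ := hs.exists_forall_hasFDerivWithinAt_of_hasFDerivWithinAt_symmetric
    (ω := fun z => Λ (W z)) (dω := fun z => Λ.comp (W' z))
    (fun z hz => Λ.hasFDerivAt.comp_hasFDerivWithinAt z (hW z hz))
    fun z hz x _ y _ => inner_I_mul_apply_comm_of_divergence_eq_zero (hdiv z hz) x y
  exact ⟨H, hH⟩

end DivergenceFree

section Gradient

variable {E : Type*} [NormedAddCommGroup E] [InnerProductSpace ℝ E] [CompleteSpace E]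
  {H : E → ℝ} {G : E → E} {s : Set E} {φ : Flow ℝ E}

theorem hasGradientWithinAt_const_smul {g x : E} (h : HasGradientWithinAt H g s x) (a : ℝ) :
    HasGradientWithinAt (a • H) (a • g) s x := by
  rw [hasGradientWithinAt_iff_hasFDerivWithinAt, map_smul]
  exact h.hasFDerivWithinAt.const_smul a

theorem hasGradientWithinAt_comp_linearIsometry {g x : E} {R : E →ₗᵢ[ℝ] E}
    (h : HasGradientWithinAt H (R g) s (R x)) (hR : MapsTo R s s) :
    HasGradientWithinAt (H ∘ R) g s x := by
  have hcomp := h.hasFDerivWithinAt.comp x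
    R.toContinuousLinearMap.hasFDerivAt.hasFDerivWithinAt hR
  refine hasGradientWithinAt_iff_hasFDerivWithinAt.2 (hcomp.congr_fderiv ?_)
  ext v
  simp

theorem hasDerivWithinAt_comp_of_hasGradientWithinAt {γ : ℝ → E} {g v : E} {t : ℝ} {S : Set ℝ}
    (hH : HasGradientWithinAt H g s (γ t)) (hγ : HasDerivWithinAt γ v S t) (hS : MapsTo γ S s) :
    HasDerivWithinAt (H ∘ γ) ⟪g, v⟫ S t := by
  simpa using hH.hasFDerivWithinAt.comp_hasDerivWithinAt t hγ hS

theorem IsFlowAlong.hasDerivWithinAt_comp {F : E → E} (h : IsFlowAlong φ F s)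
    (hH : ∀ x ∈ s, HasGradientWithinAt H (G x) s x) {x : E} {S : Set ℝ}
    (hS : ∀ t ∈ S, φ t x ∈ s) {t : ℝ} (ht : t ∈ S) :
    HasDerivWithinAt (fun t => H (φ t x)) ⟪G (φ t x), F (φ t x)⟫ S t :=
  hasDerivWithinAt_comp_of_hasGradientWithinAt (γ := (φ · x)) (hH _ (hS t ht))
    (h x t (hS t ht)).hasDerivWithinAt hS

theorem IsFlowAlong.apply_lt_of_neg_gradient (h : IsFlowAlong φ (-G) s)
    (hs : IsForwardInvariant φ s) (hH : ∀ x ∈ s, HasGradientWithinAt H (G x) s x) {x : E}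
    (hx : x ∈ s) (hG : ∀ t, 0 ≤ t → G (φ t x) ≠ 0) {t : ℝ} (ht : 0 < t) : H (φ t x) < H x := by
  have hderiv {τ : ℝ} (hτ : τ ∈ Ici 0) :=
    h.hasDerivWithinAt_comp hH (S := Ici 0) (fun τ hτ => hs hτ hx) hτ
  have hanti : StrictAntiOn (fun τ => H (φ τ x)) (Ici 0) :=
    strictAntiOn_of_hasDerivWithinAt_neg (convex_Ici 0)
      (fun τ hτ => (hderiv hτ).continuousWithinAt)
      (fun τ hτ => (hderiv (interior_subset hτ)).mono interior_subset) fun τ hτ => by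
        rw [Pi.neg_apply, inner_neg_right, neg_lt_zero, real_inner_self_pos]
        exact hG τ (interior_subset hτ)
  simpa using hanti self_mem_Ici ht.le ht

theorem IsFlowAlong.apply_eq_of_inner_gradient_eq_zero {F : E → E} (h : IsFlowAlong φ F s)
    (hs : IsInvariant φ s) (hH : ∀ x ∈ s, HasGradientWithinAt H (G x) s x)
    (hGF : ∀ x ∈ s, ⟪G x, F x⟫ = 0) {x : E} (hx : x ∈ s) (t : ℝ) : H (φ t x) = H x := by
  have hderiv (τ : ℝ) : HasDerivAt (fun τ => H (φ τ x)) 0 τ := by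
    simpa [hGF _ (hs τ hx)] using
      h.hasDerivWithinAt_comp hH (S := univ) (fun τ _ => hs τ hx) (mem_univ τ)
  simpa using is_const_of_deriv_eq_zero (fun τ => (hderiv τ).differentiableAt)
    (fun τ => (hderiv τ).deriv) t 0

theorem eq_of_hasGradientWithinAt_eq {H₁ H₂ : E → ℝ} (hs : Convex ℝ s)
    (h₁ : ∀ x ∈ s, HasGradientWithinAt H₁ (G x) s x)
    (h₂ : ∀ x ∈ s, HasGradientWithinAt H₂ (G x) s x) {x y : E} (hx : x ∈ s) (hy : y ∈ s)
    (hxy : H₁ x = H₂ x) : H₁ y = H₂ y := by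
  have hsub := hs.norm_image_sub_le_of_norm_hasFDerivWithin_le (f := H₁ - H₂) (f' := 0) (C := 0)
    (fun z hz => by
      simpa using! (h₁ z hz).hasFDerivWithinAt.sub (h₂ z hz).hasFDerivWithinAt) (by simp) hx hy
  rw [zero_mul, norm_le_zero_iff, sub_eq_zero] at hsub
  linarith [show H₁ y - H₂ y = H₁ x - H₂ x from hsub]

end Gradient

section UnitCircle

theorem exists_forall_mul_pos_of_isPreconnected {X : Type*} [TopologicalSpace X] {s : Set X}
    (hs : IsPreconnected s) (hne : s.Nonempty) {f : X → ℝ} (hf : ContinuousOn f s)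
    (hf₀ : ∀ x ∈ s, f x ≠ 0) : ∃ a : ℝ, a ≠ 0 ∧ ∀ x ∈ s, 0 < a * f x := by
  obtain ⟨x₀, hx₀⟩ := hne
  refine ⟨f x₀, hf₀ x₀ hx₀, fun x hx => ?_⟩
  by_contra! hneg
  have hzero : (0 : ℝ) ∈ uIcc (f x₀) (f x) := by
    rcases mul_nonpos_iff.1 hneg with h | h
    · exact mem_uIcc.2 (.inr h.symm)
    · exact mem_uIcc.2 (.inl h)
  obtain ⟨y, hy, hfy⟩ := (hs.image f hf).ordConnected.uIcc_subset (mem_image_of_mem f hx₀)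
    (mem_image_of_mem f hx) hzero
  exact hf₀ y hy hfy

theorem exp_mul_I_mem_sphere (θ : ℝ) : Complex.exp (θ * Complex.I) ∈ sphere (0 : ℂ) 1 := by
  rw [mem_sphere_zero_iff_norm, Complex.norm_exp_ofReal_mul_I]

theorem apply_eq_of_mem_sphere_of_inner_I_mul_eq_zero {H : ℂ → ℝ} {G : ℂ → ℂ} {s : Set ℂ}
    (hs : sphere 0 1 ⊆ s) (hH : ∀ z ∈ s, HasGradientWithinAt H (G z) s z)
    (hG : ∀ z ∈ sphere 0 1, ⟪G z, Complex.I * z⟫ = 0) {z w : ℂ} (hz : z ∈ sphere 0 1)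
    (hw : w ∈ sphere 0 1) : H z = H w := by
  let γ : ℝ → ℂ := fun θ => Complex.exp (θ * Complex.I)
  have hγ (θ : ℝ) : HasDerivAt γ (Complex.I * γ θ) θ := by
    have := ((Complex.ofRealCLM.hasDerivAt (x := θ)).mul_const Complex.I).cexp
    simpa [γ, mul_comm] using! this
  have hderiv (θ : ℝ) : HasDerivAt (H ∘ γ) 0 θ := by
    have := hasDerivWithinAt_comp_of_hasGradientWithinAt (S := univ)
      (hH _ (hs (exp_mul_I_mem_sphere θ))) (hγ θ).hasDerivWithinAt
      fun τ _ => hs (exp_mul_I_mem_sphere τ)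
    rwa [hG _ (exp_mul_I_mem_sphere θ), hasDerivWithinAt_univ] at this
  have hγ_arg {u : ℂ} (hu : u ∈ sphere 0 1) : γ u.arg = u := by
    simpa [mem_sphere_zero_iff_norm.1 hu] using Complex.norm_mul_exp_arg_mul_I u
  simpa [hγ_arg hz, hγ_arg hw] using is_const_of_deriv_eq_zero
    (fun θ => (hderiv θ).differentiableAt) (fun θ => (hderiv θ).deriv) z.arg w.arg

theorem isPreconnected_unitCircle : IsPreconnected (sphere (0 : ℂ) 1) :=
  isPreconnected_sphere (by rw [Complex.rank_real_complex]; norm_num) 0 1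

end UnitCircle

section Lyapunov

open scoped omegaLimit unitInterval

variable {X : Type*} [TopologicalSpace X]

theorem nonempty_inter_frontier_of_isPreconnected {s D : Set X} (hs : IsPreconnected s)
    (hD : (s ∩ D).Nonempty) (hD' : (s ∩ Dᶜ).Nonempty) : (s ∩ frontier D).Nonempty := by
  by_contra hempty
  have hcover : s ⊆ interior D ∪ interior Dᶜ := by
    rw [← compl_frontier_eq_union_interior]
    exact fun x hx hx' => hempty ⟨x, hx, hx'⟩
  obtain ⟨x, hxs, hxD⟩ := hD
  obtain ⟨y, hys, hyD⟩ := hD'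
  obtain ⟨z, -, hz, hz'⟩ := hs _ _ isOpen_interior isOpen_interior hcover
    ⟨x, hxs, (hcover hxs).resolve_right fun h => interior_subset h hxD⟩
    ⟨y, hys, (hcover hys).resolve_left fun h => hyD (interior_subset h)⟩
  exact interior_subset hz' (interior_subset hz)

theorem isPreconnected_of_existsUnique_fst_mem {Y : Type*} [TopologicalSpace Y] [T2Space X]
    {P : Set (Y × X)} {S : Set X} (hP : IsCompact P) (hS : IsPreconnected S)
    (hPS : ∀ p ∈ P, p.2 ∈ S) (hunique : ∀ x ∈ S, ∃! y, (y, x) ∈ P) : IsPreconnected P := by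
  have : CompactSpace P := isCompact_iff_compactSpace.1 hP
  let pr : P → X := fun p => p.1.2
  have hinj : pr.Injective := fun p q (hpq : p.1.2 = q.1.2) => Subtype.ext <|
    Prod.ext ((hunique _ (hPS p p.2)).unique p.2 (by rw [hpq]; exact q.2)) hpq
  have hrange : S ⊆ range pr := fun x hx =>
    let ⟨y, hy, _⟩ := hunique x hx
    ⟨⟨(y, x), hy⟩, rfl⟩
  have hpre := hS.preimage_of_isClosedMap hinj
    (continuous_snd.comp continuous_subtype_val).isClosedMap hrange
  rw [show pr ⁻¹' S = univ from eq_univ_of_forall fun p => hPS p p.2] at hpre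
  simpa using hpre.image _ continuous_subtype_val.continuousOn

theorem contractibleSpace_of_eventually_mapsTo {φ : Flow ℝ X} {U : Set X} {o : X} (ho : o ∈ U)
    (hU : IsForwardInvariant φ U) (hlim : ∀ V ∈ 𝓝 o, ∀ᶠ t in atTop, MapsTo (φ t) U V) :
    ContractibleSpace U := by
  let f : I × U → X := fun p => if p.1 = 0 then o else φ ((p.1 : ℝ)⁻¹ - 1) p.2
  have hfU (p : I × U) : f p ∈ U := by
    by_cases hp : p.1 = 0
    · simpa only [f, if_pos hp] using ho
    · simp only [f, if_neg hp]
      exact hU (sub_nonneg.2 (one_le_inv₀ (unitInterval.pos_iff_ne_zero.2 hp) |>.2 p.1.2.2)) p.2.2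
  have hf : Continuous f := continuous_iff_continuousAt.2 fun ⟨s, x⟩ => by
    by_cases hs : s = 0
    · subst hs
      intro V hV
      replace hV : V ∈ 𝓝 o := by simpa only [f, if_pos] using hV
      have htime : Tendsto (fun s : ℝ => s⁻¹ - 1) (𝓝[>] 0) atTop :=
        tendsto_atTop_add_const_right _ _ tendsto_inv_nhdsGT_zero
      have hfst : Tendsto (fun p : I × U => (p.1 : ℝ)) (𝓝 (0, x)) (𝓝 0) :=
        (continuous_subtype_val.comp continuous_fst).tendsto' _ _ rfl
      rw [mem_map]
      filter_upwards [hfst.eventually (eventually_nhdsWithin_iff.1 (htime.eventually (hlim V hV)))]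
        with p hp
      by_cases hp₀ : p.1 = 0
      · simpa only [mem_preimage, f, if_pos hp₀] using mem_of_mem_nhds hV
      · simpa only [mem_preimage, f, if_neg hp₀] using
          hp (unitInterval.pos_iff_ne_zero.2 hp₀) p.2.2
    · have hflow : ContinuousAt (fun p : I × U => φ ((p.1 : ℝ)⁻¹ - 1) (p.2 : X)) (s, x) := by
        have hs' : (s : ℝ) ≠ 0 := by simpa using hs
        fun_prop (disch := assumption)
      refine hflow.congr ?_
      filter_upwards [(continuous_fst.continuousAt (x := (s, x))).eventually_ne hs] with p hp
      exact (if_neg hp).symm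
  refine contractible_iff_id_nullhomotopic _ |>.2 ⟨⟨o, ho⟩, .symm
    ⟨⟨⟨fun p => ⟨f p, hfU p⟩, hf.subtype_mk _⟩, fun x => ?_, fun x => ?_⟩⟩⟩
  · simp [f]
  · simp [f]

/-- `H` is a strict Lyapunov function, for the fixed point `o` of the flow `φ`, on the compact
forward invariant set `D`: it decreases strictly along every nonconstant forward trajectory. -/
structure IsStrictLyapunov (φ : Flow ℝ X) (D : Set X) (o : X) (H : X → ℝ) : Prop where
  isCompact : IsCompact D
  isForwardInvariant : IsForwardInvariant φ D
  mem : o ∈ D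
  apply_self : ∀ t, φ t o = o
  continuousOn : ContinuousOn H D
  apply_flow_lt : ∀ x ∈ D, x ≠ o → ∀ t, 0 < t → H (φ t x) < H x

namespace IsStrictLyapunov

variable {φ : Flow ℝ X} {D : Set X} {o : X} {H : X → ℝ} {x : X} {h : ℝ}

theorem apply_lt_apply (hL : IsStrictLyapunov φ D o H) (hx : x ∈ D) (hxo : x ≠ o) : H o < H x := by
  obtain ⟨m, hm, hmin⟩ := hL.isCompact.exists_isMinOn ⟨o, hL.mem⟩ hL.continuousOn
  have hmo : m = o := by
    by_contra hmo
    exact (hL.apply_flow_lt m hm hmo 1 one_pos).not_ge (hmin (hL.isForwardInvariant zero_le_one hm))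
  subst hmo
  exact (hmin (hL.isForwardInvariant zero_le_one hx)).trans_lt (hL.apply_flow_lt x hx hxo 1 one_pos)

theorem apply_flow_le (hL : IsStrictLyapunov φ D o H) (hx : x ∈ D) {t : ℝ} (ht : 0 ≤ t) :
    H (φ t x) ≤ H x := by
  rcases eq_or_ne x o with rfl | hxo
  · rw [hL.apply_self]
  rcases ht.eq_or_lt with rfl | ht
  · rw [φ.map_zero_apply]
  · exact (hL.apply_flow_lt x hx hxo t ht).le

theorem strictAntiOn (hL : IsStrictLyapunov φ D o H) (hx : x ∈ D) (hxo : x ≠ o) :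
    StrictAntiOn (fun t => H (φ t x)) (Ici 0) := by
  intro s hs t _ hst
  have hne : φ s x ≠ o := fun hso => hxo <| by
    rw [← hL.apply_self (-s), ← hso, ← φ.map_add, neg_add_cancel, φ.map_zero_apply]
  have := hL.apply_flow_lt _ (hL.isForwardInvariant hs hx) hne (t - s) (sub_pos.2 hst)
  rwa [← φ.map_add, sub_add_cancel] at this

theorem subset_singleton_of_isInvariant (hL : IsStrictLyapunov φ D o H) {K : Set X}
    (hK : IsClosed K) (hKD : K ⊆ D) (hKφ : IsInvariant φ K) : K ⊆ {o} := by
  intro x hx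
  obtain ⟨m, hm, hmax⟩ := (hL.isCompact.of_isClosed_subset hK hKD).exists_isMaxOn ⟨x, hx⟩
    (hL.continuousOn.mono hKD)
  have hmo : φ (-1) m = o := by
    by_contra hmo
    have := hL.apply_flow_lt _ (hKD (hKφ (-1) hm)) hmo 1 one_pos
    rw [← φ.map_add, add_neg_cancel, φ.map_zero_apply] at this
    exact this.not_ge (hmax (hKφ (-1) hm))
  have hm' : m = o := by
    rw [← hL.apply_self 1, ← hmo, ← φ.map_add, add_neg_cancel, φ.map_zero_apply]
  by_contra hxo
  exact (hL.apply_lt_apply (hKD hx) hxo).not_ge (hm' ▸ hmax hx)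

theorem eventually_mapsTo [T2Space X] (hL : IsStrictLyapunov φ D o H) {V : Set X}
    (hV : V ∈ 𝓝 o) : ∀ᶠ t in atTop, MapsTo (φ t) D V := by
  have hforward : ∀ᶠ t in atTop, MapsTo (φ t) D D :=
    (eventually_ge_atTop 0).mono fun t ht => hL.isForwardInvariant ht
  have homega : ω⁺ φ D ⊆ D := (omegaLimit_subset_closure_image2 _ _ _ hforward).trans
    (closure_minimal (image2_subset_iff.2 fun _ ht _ hx => ht hx) hL.isCompact.isClosed)
  have homega' : ω⁺ φ D ⊆ {o} :=
    hL.subset_singleton_of_isInvariant (isClosed_omegaLimit _ _ _) homega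
      (φ.isInvariant_omegaLimit _ _ fun t => tendsto_atTop_add_const_left _ t tendsto_id)
  have := eventually_mapsTo_of_isCompact_absorbing_of_isOpen_of_omegaLimit_subset atTop φ D
    hL.isCompact hforward isOpen_interior
    (homega'.trans (singleton_subset_iff.2 (mem_interior_iff_mem_nhds.2 hV)))
  exact this.mono fun t ht => ht.mono_right interior_subset

theorem eventually_mapsTo_lt [T2Space X] (hL : IsStrictLyapunov φ D o H) (hh : H o < h) :
    ∀ᶠ t in atTop, MapsTo (φ t) D {y | H y < h} := by
  obtain ⟨V, hV, hVD⟩ := mem_nhdsWithin_iff_exists_mem_nhds_inter.1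
    (hL.continuousOn o hL.mem (Iio_mem_nhds hh))
  filter_upwards [hL.eventually_mapsTo hV, eventually_ge_atTop 0] with t htV ht x hx
  exact hVD ⟨htV hx, hL.isForwardInvariant ht hx⟩

theorem exists_mem_frontier [T2Space X] (hL : IsStrictLyapunov φ D o H) (hx : x ∈ D)
    (hxo : x ≠ o) : ∃ s ≥ 0, ∃ y ∈ frontier D, φ s y = x := by
  obtain ⟨T, hT, hT₀⟩ := ((hL.eventually_mapsTo (isOpen_compl_singleton.mem_nhds hxo.symm)).and
    (eventually_ge_atTop 0)).exists
  have hback (s : ℝ) : φ s (φ (-s) x) = x := by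
    rw [← φ.map_add, add_neg_cancel, φ.map_zero_apply]
  have hleave : φ (-T) x ∉ D := fun hmem => hT hmem (hback T)
  obtain ⟨_, ⟨s, hs, rfl⟩, hfr⟩ := nonempty_inter_frontier_of_isPreconnected
    (s := (fun s => φ (-s) x) '' Icc 0 T) (D := D)
    (isPreconnected_Icc.image _ (by fun_prop))
    ⟨x, ⟨0, ⟨le_rfl, hT₀⟩, by simp⟩, hx⟩ ⟨_, ⟨T, ⟨hT₀, le_rfl⟩, rfl⟩, hleave⟩
  exact ⟨s, hs.1, _, hfr, hback s⟩

theorem apply_le_of_forall_mem_frontier [T2Space X] (hL : IsStrictLyapunov φ D o H) {c : ℝ}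
    (hc : ∀ y ∈ frontier D, H y = c) (hx : x ∈ D) (hxo : x ≠ o) : H x ≤ c := by
  obtain ⟨s, hs, y, hy, rfl⟩ := hL.exists_mem_frontier hx hxo
  rw [← hc y hy]
  exact hL.apply_flow_le (hL.isCompact.isClosed.frontier_subset hy) hs

theorem isOpen_sublevel (hL : IsStrictLyapunov φ D o H) (hh : ∀ y ∈ frontier D, h ≤ H y) :
    IsOpen {y ∈ D | H y < h} := by
  have hsub : {y ∈ D | H y < h} = interior D ∩ H ⁻¹' Iio h := by
    refine Subset.antisymm (fun y hy => ⟨?_, hy.2⟩) fun y hy => ⟨interior_subset hy.1, hy.2⟩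
    by_contra hint
    exact (hh y ⟨subset_closure hy.1, hint⟩).not_gt hy.2
  rw [hsub]
  exact (hL.continuousOn.mono interior_subset).isOpen_inter_preimage isOpen_interior isOpen_Iio

theorem frontier_sublevel [T2Space X] (hL : IsStrictLyapunov φ D o H) (hoh : H o < h)
    (hh : ∀ y ∈ frontier D, h ≤ H y) : frontier {y ∈ D | H y < h} = {y ∈ D | H y = h} := by
  rw [(hL.isOpen_sublevel hh).frontier_eq]
  refine Subset.antisymm (fun y hy => ?_) fun y hy => ⟨?_, fun hlt => hlt.2.ne hy.2⟩
  · have hclosed : IsClosed (D ∩ H ⁻¹' Iic h) :=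
      hL.continuousOn.preimage_isClosed_of_isClosed hL.isCompact.isClosed isClosed_Iic
    have hsub : {y ∈ D | H y < h} ⊆ D ∩ H ⁻¹' Iic h := fun z hz => ⟨hz.1, hz.2.le⟩
    have hle : y ∈ D ∩ H ⁻¹' Iic h := closure_minimal hsub hclosed hy.1
    exact ⟨hle.1, hle.2.antisymm (not_lt.1 fun hlt => hy.2 ⟨hle.1, hlt⟩)⟩
  · have hyo : y ≠ o := by rintro rfl; exact hoh.ne hy.2
    have hlim : Tendsto (φ · y) (𝓝[>] 0) (𝓝 y) := by
      have hcont : Continuous (φ · y) := by fun_prop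
      simpa using (hcont.tendsto 0).mono_left nhdsWithin_le_nhds
    refine mem_closure_of_tendsto hlim ?_
    filter_upwards [self_mem_nhdsWithin] with t ht
    exact ⟨hL.isForwardInvariant (le_of_lt ht) hy.1, hy.2 ▸ hL.apply_flow_lt y hy.1 hyo t ht⟩

theorem isPreconnected_level [T2Space X] (hL : IsStrictLyapunov φ D o H)
    (hfr : IsPreconnected (frontier D)) (hoh : H o < h) (hh : ∀ y ∈ frontier D, h ≤ H y) :
    IsPreconnected {y ∈ D | H y = h} := by
  obtain ⟨T, hT, hT₀⟩ := ((hL.eventually_mapsTo_lt hoh).and (eventually_ge_atTop 0)).exists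
  have hfrD : frontier D ⊆ D := hL.isCompact.isClosed.frontier_subset
  have hanti {y : X} (hy : y ∈ frontier D) : StrictAntiOn (fun s => H (φ s y)) (Ici 0) :=
    hL.strictAntiOn (hfrD hy) (by rintro rfl; exact (hh _ hy).not_gt hoh)
  have hHφ : ContinuousOn (fun p : ℝ × X => H (φ p.1 p.2)) (Icc 0 T ×ˢ frontier D) :=
    hL.continuousOn.comp (by fun_prop) fun p hp => hL.isForwardInvariant hp.1.1 (hfrD hp.2)
  -- `P` is the graph of the time at which the trajectory of a frontier point reaches the level `h`.
  let P : Set (ℝ × X) := (Icc 0 T ×ˢ frontier D) ∩ (fun p => H (φ p.1 p.2)) ⁻¹' {h}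
  have hPcompact : IsCompact P := by
    have hrect : IsCompact (Icc 0 T ×ˢ frontier D) :=
      isCompact_Icc.prod (hL.isCompact.of_isClosed_subset isClosed_frontier hfrD)
    exact hrect.of_isClosed_subset
      (hHφ.preimage_isClosed_of_isClosed hrect.isClosed isClosed_singleton) inter_subset_left
  have hPunique (y : X) (hy : y ∈ frontier D) : ∃! s, (s, y) ∈ P := by
    obtain ⟨s, hs, hsh⟩ := intermediate_value_Icc' hT₀
      (hHφ.comp (f := fun s => (s, y)) (by fun_prop) fun s hs => ⟨hs, hy⟩)
      (mem_Icc.2 ⟨(hT (hfrD hy)).le, by simpa using hh y hy⟩)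
    exact ⟨s, ⟨⟨hs, hy⟩, hsh⟩, fun t ht =>
      (hanti hy).injOn ht.1.1.1 hs.1 (ht.2.trans (Eq.symm hsh))⟩
  have hPconn : IsPreconnected P :=
    isPreconnected_of_existsUnique_fst_mem hPcompact hfr (fun p hp => hp.1.2) hPunique
  convert hPconn.image (fun p => φ p.1 p.2) (by fun_prop) using 1
  refine Subset.antisymm (fun y hy => ?_) ?_
  · obtain ⟨s, hs, z, hz, rfl⟩ :=
      hL.exists_mem_frontier hy.1 (by rintro rfl; exact hoh.ne hy.2)
    have hsT : s ≤ T := by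
      by_contra! hTs
      exact ((hanti hz hT₀ hs hTs).trans (hT (hfrD hz))).ne hy.2
    exact ⟨(s, z), ⟨⟨⟨hs, hsT⟩, hz⟩, hy.2⟩, rfl⟩
  · rintro _ ⟨⟨s, y⟩, ⟨⟨hs, hy⟩, hsh⟩, rfl⟩
    exact ⟨hL.isForwardInvariant hs.1 (hfrD hy), hsh⟩

theorem contractibleSpace_sublevel [T2Space X] (hL : IsStrictLyapunov φ D o H) (hoh : H o < h) :
    ContractibleSpace {y ∈ D | H y < h} :=
  contractibleSpace_of_eventually_mapsTo ⟨hL.mem, hoh⟩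
    (fun _ ht _ hy => ⟨hL.isForwardInvariant ht hy.1, (hL.apply_flow_le hy.1 ht).trans_lt hy.2⟩)
    fun _ hV => (hL.eventually_mapsTo hV).mono fun _ ht _ hy => ht hy.1

theorem exists_isOpen_simplyConnectedSpace_frontier_eq [T2Space X]
    (hL : IsStrictLyapunov φ D o H) (hoh : H o < h) (hh : ∀ y ∈ frontier D, h ≤ H y) :
    ∃ U, IsOpen U ∧ o ∈ U ∧ U ⊆ D ∧ SimplyConnectedSpace U ∧ frontier U = {y ∈ D | H y = h} :=
  have := hL.contractibleSpace_sublevel hoh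
  ⟨{y ∈ D | H y < h}, hL.isOpen_sublevel hh, ⟨hL.mem, hoh⟩, sep_subset _ _,
    SimplyConnectedSpace.ofContractible _, hL.frontier_sublevel hoh hh⟩

end IsStrictLyapunov

end Lyapunov

section UnitDisc

theorem eq_zero_of_inner_eq_zero {g v d : ℂ} (hg : g ≠ 0) (hv : v ≠ 0) (hgv : ⟪g, v⟫ = 0)
    (hgd : ⟪g, d⟫ = 0) (hvd : ⟪v, d⟫ = 0) : d = 0 := by
  simp only [Complex.inner, Complex.mul_re, Complex.conj_re, Complex.conj_im] at hgv hgd hvd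
  have hdet : Complex.normSq g * Complex.normSq v = (g.re * v.im - g.im * v.re) ^ 2 := by
    simp only [Complex.normSq_apply]
    linear_combination (g.re * v.re + g.im * v.im) * hgv
  have hdet₀ : g.re * v.im - g.im * v.re ≠ 0 := by
    rw [← sq_pos_iff, ← hdet]
    exact mul_pos (Complex.normSq_pos.2 hg) (Complex.normSq_pos.2 hv)
  refine Complex.ext (mul_left_cancel₀ hdet₀ ?_) (mul_left_cancel₀ hdet₀ ?_)
  · rw [Complex.zero_re, mul_zero]
    linear_combination v.im * hgd - g.im * hvd
  · rw [Complex.zero_im, mul_zero]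
    linear_combination g.re * hvd - v.re * hgd

theorem sphere_ne_zero {z : ℂ} (hz : z ∈ sphere (0 : ℂ) 1) : z ≠ 0 :=
  ne_zero_of_mem_unit_sphere ⟨z, hz⟩

theorem exists_forall_mem_sphere_inner_pos {G : ℂ → ℂ} (hG : ContinuousOn G (sphere 0 1))
    (hG₀ : ∀ z ∈ sphere 0 1, G z ≠ 0) (htan : ∀ z ∈ sphere 0 1, ⟪G z, Complex.I * z⟫ = 0) :
    ∃ σ : ℝ, σ ≠ 0 ∧ ∀ z ∈ sphere 0 1, 0 < ⟪z, (σ • G) z⟫ := by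
  obtain ⟨σ, hσ, hpos⟩ := exists_forall_mul_pos_of_isPreconnected (f := fun z => ⟪z, G z⟫)
    isPreconnected_unitCircle (NormedSpace.sphere_nonempty.2 zero_le_one)
    (continuousOn_id.inner hG) fun z hz hzG => sphere_ne_zero hz <|
      eq_zero_of_inner_eq_zero (hG₀ z hz) (mul_ne_zero Complex.I_ne_zero (sphere_ne_zero hz))
        (htan z hz) (by rwa [real_inner_comm]) (inner_I_mul_self z)
  exact ⟨σ, hσ, fun z hz => by simpa only [Pi.smul_apply, real_inner_smul_right] using hpos z hz⟩

variable {G : ℂ → ℂ} {H : ℂ → ℝ} {K : ℝ≥0}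

theorem exists_isStrictLyapunov_of_outward_gradient (hG : LipschitzOnWith K G (closedBall 0 1))
    (hH : ∀ z ∈ closedBall 0 1, HasGradientWithinAt H (G z) (closedBall 0 1) z)
    (hpos : ∀ z ∈ sphere 0 1, 0 < ⟪z, G z⟫)
    (hzero : ∀ z ∈ closedBall 0 1, G z = 0 ↔ z = 0) :
    ∃ φ : Flow ℝ ℂ, IsStrictLyapunov φ (closedBall 0 1) 0 H := by
  have h₀ : (0 : ℂ) ∈ closedBall 0 1 := mem_closedBall_self zero_le_one
  obtain ⟨φ, hφ, hinv⟩ := exists_isFlowAlong_isForwardInvariant_unitBall (F := -G) hG.neg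
    fun z hz => by
      rw [Pi.neg_apply, inner_neg_right]
      exact neg_nonpos.2 (hpos z hz).le
  have hfix (t : ℝ) : φ t 0 = 0 :=
    hφ.apply_eq_self_of_eq_zero hinv hG.neg h₀ (by simpa using (hzero 0 h₀).2 rfl) t
  refine ⟨φ, isCompact_closedBall 0 1, hinv, h₀, hfix,
    fun z hz => (hH z hz).continuousWithinAt, fun z hz hz₀ t ht => ?_⟩
  refine hφ.apply_lt_of_neg_gradient hinv hH hz (fun τ hτ hGτ => hz₀ ?_) ht
  rw [← hfix (-τ), ← (hzero _ (hinv hτ hz)).1 hGτ, ← φ.map_add, neg_add_cancel,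
    φ.map_zero_apply]

theorem isPreconnected_level_and_exists_region_of_gradient
    (hG : LipschitzOnWith K G (closedBall 0 1))
    (hH : ∀ z ∈ closedBall 0 1, HasGradientWithinAt H (G z) (closedBall 0 1) z)
    (htan : ∀ z ∈ sphere 0 1, ⟪G z, Complex.I * z⟫ = 0)
    (hzero : ∀ z ∈ closedBall 0 1, G z = 0 ↔ z = 0) {z : ℂ} (hz : z ∈ closedBall 0 1)
    (hz₀ : z ≠ 0) :
    IsPreconnected {w ∈ closedBall 0 1 | H w = H z} ∧ ∃ U, IsOpen U ∧ (0 : ℂ) ∈ U ∧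
      U ⊆ closedBall 0 1 ∧ SimplyConnectedSpace U ∧
      frontier U = {w ∈ closedBall 0 1 | H w = H z} := by
  have hsphere : frontier (closedBall (0 : ℂ) 1) = sphere 0 1 := frontier_closedBall _ one_ne_zero
  obtain ⟨σ, hσ, hpos⟩ := exists_forall_mem_sphere_inner_pos
    (hG.continuousOn.mono sphere_subset_closedBall)
    (fun w hw => mt (hzero w (sphere_subset_closedBall hw)).1 (sphere_ne_zero hw)) htan
  obtain ⟨φ, hL⟩ := exists_isStrictLyapunov_of_outward_gradient (G := σ • G) (H := σ • H)
    ((lipschitzWith_smul σ).comp_lipschitzOnWith hG)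
    (fun w hw => hasGradientWithinAt_const_smul (hH w hw) σ) hpos
    fun w hw => by simp [hσ, hzero w hw]
  have hlevel : {w ∈ closedBall 0 1 | (σ • H) w = (σ • H) z} =
      {w ∈ closedBall 0 1 | H w = H z} := by simp [hσ]
  have hconst (w : ℂ) (hw : w ∈ frontier (closedBall 0 1)) : (σ • H) w = σ * H 1 := by
    rw [Pi.smul_apply, smul_eq_mul, apply_eq_of_mem_sphere_of_inner_I_mul_eq_zero
      sphere_subset_closedBall hH htan (hsphere ▸ hw)
      (show (1 : ℂ) ∈ sphere 0 1 by simp)]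
  have hlt : (σ • H) 0 < (σ • H) z := hL.apply_lt_apply hz hz₀
  have hle (w : ℂ) (hw : w ∈ frontier (closedBall 0 1)) : (σ • H) z ≤ (σ • H) w :=
    (hL.apply_le_of_forall_mem_frontier hconst hz hz₀).trans_eq (hconst w hw).symm
  rw [← hlevel]
  exact ⟨hL.isPreconnected_level (hsphere ▸ isPreconnected_unitCircle) hlt hle,
    hL.exists_isOpen_simplyConnectedSpace_frontier_eq hlt hle⟩

end UnitDisc

section Orbits

variable {X : Type*} [TopologicalSpace X] {φ : Flow ℝ X} {L : Set X} {x : X}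

theorem orbit_eq_of_isPreconnected (hL : IsPreconnected L) (hinv : IsInvariant φ L)
    (horbit : ∀ y ∈ L, φ.orbit y ∈ 𝓝[L] y) (hx : x ∈ L) : φ.orbit x = L := by
  refine Subset.antisymm ?_ fun y hy => ?_
  · rintro _ ⟨t, rfl⟩
    exact hinv t hx
  · refine hL.induction₂ (fun a b => b ∈ φ.orbit a) horbit ?_ ?_ hx hy
    · rintro a _ _ - - - hab ⟨t, rfl⟩
      exact φ.mem_orbit_of_mem_orbit t hab
    · rintro a _ - - ⟨t, rfl⟩
      refine ⟨-t, ?_⟩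
      change φ (-t) (φ t a) = a
      rw [← φ.map_add, neg_add_cancel, φ.map_zero_apply]

theorem bijOn_of_isInvariant (hinv : IsInvariant φ L) (t : ℝ) : BijOn (φ t) L L :=
  ⟨hinv t, (φ.toHomeomorph t).injective.injOn, ((φ.isInvariant_iff_image_eq L).1 hinv t).ge⟩

theorem exists_period_of_isCompact (hL : IsCompact L) (hinv : IsInvariant φ L)
    (harc : ∀ y ∈ L, (φ · y) '' Ioo (-1) 1 ∈ 𝓝[L] y) (hx : x ∈ L) :
    ∃ T, 0 < T ∧ ∀ t, φ (t + T) x = φ t x := by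
  obtain ⟨p, hp, hcluster⟩ := hL.exists_mapClusterPt (u := (φ · x)) (f := (atTop : Filter ℝ))
    (tendsto_principal.2 (Eventually.of_forall fun t => hinv t hx))
  have hreturn : ∃ᶠ t in atTop, φ t x ∈ (φ · p) '' Ioo (-1) 1 := by
    obtain ⟨V, hV, hVL⟩ := mem_nhdsWithin_iff_exists_mem_nhds_inter.1 (harc p hp)
    exact (hcluster.frequently hV).mono fun t ht => hVL ⟨ht, hinv t hx⟩
  obtain ⟨t₁, s₁, hs₁, hst₁⟩ := hreturn.exists
  obtain ⟨t₂, ht, s₂, hs₂, hst₂⟩ := frequently_atTop.1 hreturn (t₁ + 2)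
  have hpx {t s : ℝ} (hst : φ s p = φ t x) : φ (t - s) x = p := by
    rw [sub_eq_neg_add, φ.map_add, ← hst, ← φ.map_add, neg_add_cancel, φ.map_zero_apply]
  refine ⟨(t₂ - s₂) - (t₁ - s₁), by linarith [hs₁.1, hs₂.2], fun t => ?_⟩
  calc φ (t + ((t₂ - s₂) - (t₁ - s₁))) x
      = φ (t - (t₁ - s₁)) (φ (t₂ - s₂) x) := by rw [← φ.map_add]; congr 1; ring
    _ = φ (t - (t₁ - s₁)) (φ (t₁ - s₁) x) := by rw [hpx hst₂, hpx hst₁]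
    _ = φ t x := by rw [← φ.map_add, sub_add_cancel]

end Orbits

section StrictDerivative

variable {E E' : Type*} [NormedAddCommGroup E] [NormedSpace ℝ E] [NormedAddCommGroup E']
  [NormedSpace ℝ E']

theorem hasFDerivAtFilter_nhdsWithin_prod_of_convex {f : E → E'} {f' : E → E →L[ℝ] E'}
    {s : Set E} (hs : Convex ℝ s) (hf : ∀ x ∈ s, HasFDerivWithinAt f (f' x) s x) {x : E}
    (hf' : ContinuousWithinAt f' s x) : HasFDerivAtFilter f (f' x) (𝓝[s] x ×ˢ 𝓝[s] x) := by
  refine hasFDerivAtFilter_iff_isLittleO.2 (Asymptotics.isLittleO_iff.2 fun c hc => ?_)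
  obtain ⟨ε, hε, hball⟩ := mem_nhdsWithin_iff.1 (hf'.eventually (closedBall_mem_nhds (f' x) hc))
  have hmem : ball x ε ∩ s ∈ 𝓝[s] x :=
    inter_mem (mem_nhdsWithin_of_mem_nhds (ball_mem_nhds x hε)) self_mem_nhdsWithin
  filter_upwards [prod_mem_prod hmem hmem] with ⟨y, z⟩ ⟨hy, hz⟩
  exact ((convex_ball x ε).inter hs).norm_image_sub_le_of_norm_hasFDerivWithin_le'
    (fun w hw => (hf w hw.2).mono inter_subset_right)
    (fun w hw => mem_closedBall_iff_norm.1 (hball hw)) hz hy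

theorem eventually_fst_eq_snd_of_hasFDerivAtFilter [FiniteDimensional ℝ E] {f : E → E'}
    {f' : E →L[ℝ] E'} {l : Filter (E × E)} (hf : HasFDerivAtFilter f f' l)
    (hf' : Function.Injective f') : ∀ᶠ p in l, f p.1 = f p.2 → p.1 = p.2 := by
  obtain ⟨K, hK₀, hK⟩ :=
    (f' : E →ₗ[ℝ] E').exists_antilipschitzWith (LinearMap.ker_eq_bot.2 hf')
  filter_upwards [(hasFDerivAtFilter_iff_isLittleO.1 hf).def (inv_pos.2 (mul_pos two_pos hK₀))]
    with p hp hfp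
  have hlower : ‖p.1 - p.2‖ ≤ K * ‖f' (p.1 - p.2)‖ := by
    simpa using! hK.le_mul_dist (p.1 - p.2) 0
  rw [hfp, sub_self, zero_sub, norm_neg, mul_inv] at hp
  have hsmall : ‖p.1 - p.2‖ ≤ 2⁻¹ * ‖p.1 - p.2‖ :=
    calc ‖p.1 - p.2‖ ≤ K * ‖f' (p.1 - p.2)‖ := hlower
      _ ≤ K * (2⁻¹ * (K : ℝ)⁻¹ * ‖p.1 - p.2‖) := by gcongr; exact hp
      _ = 2⁻¹ * ‖p.1 - p.2‖ := by field_simp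
  exact sub_eq_zero.1 (norm_le_zero_iff.1 (by linarith))

end StrictDerivative

section HamiltonianFlow

/-- `φ` is the flow on `s ⊆ ℂ` of the Hamiltonian vector field `W` with Hamiltonian `H`. Since
multiplication by `i` turns Hamiltonian vector fields into gradients, the Hamiltonian is encoded
by `∇H = i W`. -/
structure IsHamiltonianFlow (φ : Flow ℝ ℂ) (W : ℂ → ℂ) (H : ℂ → ℝ) (s : Set ℂ) : Prop where
  isFlowAlong : IsFlowAlong φ W s
  isInvariant : IsInvariant φ s
  continuousOn : ContinuousOn W s
  hasGradientWithinAt : ∀ z ∈ s, HasGradientWithinAt H (Complex.I * W z) s z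

namespace IsHamiltonianFlow

variable {φ : Flow ℝ ℂ} {W : ℂ → ℂ} {H : ℂ → ℝ} {s : Set ℂ} {z : ℂ}

theorem apply_flow (hφ : IsHamiltonianFlow φ W H s) (hz : z ∈ s) (t : ℝ) : H (φ t z) = H z :=
  hφ.isFlowAlong.apply_eq_of_inner_gradient_eq_zero hφ.isInvariant hφ.hasGradientWithinAt
    (fun _ _ => inner_I_mul_self _) hz t

theorem isInvariant_level (hφ : IsHamiltonianFlow φ W H s) (c : ℝ) :
    IsInvariant φ {w ∈ s | H w = c} :=
  fun t _ hw => ⟨hφ.isInvariant t hw.1, (hφ.apply_flow hw.1 t).trans hw.2⟩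

theorem exists_mem_nhdsWithin_eq_of_apply_eq_of_inner_eq (hφ : IsHamiltonianFlow φ W H s)
    (hs : Convex ℝ s) (hz : z ∈ s) (hWz : W z ≠ 0) : ∃ A ∈ 𝓝[s] z, ∀ w ∈ A, ∀ w' ∈ A,
      H w = H w' → ⟪W z, w⟫ = ⟪W z, w'⟫ → w = w' := by
  let G : ℂ → StrongDual ℝ ℂ := fun w => InnerProductSpace.toDual ℝ ℂ (Complex.I * W w)
  have hG : ContinuousOn G s := (InnerProductSpace.toDual ℝ ℂ).continuous.comp_continuousOn
    (continuousOn_const.mul hφ.continuousOn)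
  have hinj : Function.Injective ((G z).prod (innerSL ℝ (W z))) :=
    (injective_iff_map_eq_zero _).2 fun d hd =>
      eq_zero_of_inner_eq_zero (mul_ne_zero Complex.I_ne_zero hWz) hWz (inner_I_mul_self _)
        (Prod.ext_iff.1 hd).1 (Prod.ext_iff.1 hd).2
  have hstrict := (hasFDerivAtFilter_nhdsWithin_prod_of_convex hs
    (fun w hw => (hφ.hasGradientWithinAt w hw).hasFDerivWithinAt) (hG z hz)).prodMk
    (innerSL ℝ (W z)).hasFDerivAtFilter
  obtain ⟨A, hA, hAinj⟩ := eventually_prod_self_iff'.1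
    (eventually_fst_eq_snd_of_hasFDerivAtFilter hstrict hinj)
  exact ⟨A, hA, fun w hw w' hw' h₁ h₂ => hAinj w hw w' hw' (Prod.ext h₁ h₂)⟩

theorem map_inner_flow_nhds (hφ : IsHamiltonianFlow φ W H s) (hz : z ∈ s) (hWz : W z ≠ 0) :
    map (fun t => ⟪W z, φ t z⟫) (𝓝 0) = 𝓝 ⟪W z, z⟫ := by
  have hderiv (t : ℝ) : HasDerivAt (fun t => ⟪W z, φ t z⟫) ⟪W z, W (φ t z)⟫ t := by
    simpa using! (innerSL ℝ (W z)).hasFDerivAt.comp_hasDerivAt t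
      (hφ.isFlowAlong z t (hφ.isInvariant t hz))
  have hcont : Continuous fun t => ⟪W z, W (φ t z)⟫ :=
    continuous_const.inner <| hφ.continuousOn.comp_continuous (by fun_prop)
      fun t => hφ.isInvariant t hz
  have hstrict := hasStrictDerivAt_of_hasDerivAt_of_continuousAt
    (Eventually.of_forall hderiv) (hcont.continuousAt (x := 0))
  simpa using hstrict.map_nhds_eq (by simpa using hWz)

theorem image_Ioo_mem_nhdsWithin_level (hφ : IsHamiltonianFlow φ W H s) (hs : Convex ℝ s)
    (hz : z ∈ s) (hWz : W z ≠ 0) :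
    (φ · z) '' Ioo (-1) 1 ∈ 𝓝[{w ∈ s | H w = H z}] z := by
  obtain ⟨A, hA, hAinj⟩ :=
    hφ.exists_mem_nhdsWithin_eq_of_apply_eq_of_inner_eq hs hz hWz
  have htime : Ioo (-1) 1 ∩ (φ · z) ⁻¹' A ∈ 𝓝 (0 : ℝ) := by
    have hcont : Tendsto (φ · z) (𝓝 (0 : ℝ)) (𝓝[s] z) := tendsto_nhdsWithin_iff.2
      ⟨Continuous.tendsto' (by fun_prop) _ _ (φ.map_zero_apply z),
        Eventually.of_forall fun t => hφ.isInvariant t hz⟩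
    exact inter_mem (Ioo_mem_nhds (by norm_num) one_pos) (hcont hA)
  have hvalues := image_mem_map (m := fun t => ⟪W z, φ t z⟫) htime
  rw [hφ.map_inner_flow_nhds hz hWz] at hvalues
  have hinner : Tendsto (fun w => ⟪W z, w⟫) (𝓝 z) (𝓝 ⟪W z, z⟫) :=
    Continuous.tendsto' (by fun_prop) _ _ rfl
  filter_upwards [nhdsWithin_mono _ (sep_subset _ _) hA, nhdsWithin_le_nhds (hinner hvalues),
    self_mem_nhdsWithin] with w hwA ⟨t, ⟨ht, htA⟩, htw⟩ hw
  exact ⟨t, ht, hAinj _ htA _ hwA ((hφ.apply_flow hz t).trans hw.2.symm) htw⟩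

theorem orbit_eq_level (hφ : IsHamiltonianFlow φ W H s) (hs : Convex ℝ s)
    (hlevel : IsPreconnected {w ∈ s | H w = H z}) (hW : ∀ w ∈ s, H w = H z → W w ≠ 0)
    (hz : z ∈ s) : φ.orbit z = {w ∈ s | H w = H z} := by
  refine orbit_eq_of_isPreconnected hlevel (hφ.isInvariant_level _) (fun w hw => ?_) ⟨hz, rfl⟩
  filter_upwards [hw.2 ▸ hφ.image_Ioo_mem_nhdsWithin_level hs hw.1 (hW w hw.1 hw.2)]
  rintro _ ⟨t, -, rfl⟩
  exact φ.mem_orbit w t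

theorem exists_period (hφ : IsHamiltonianFlow φ W H s) (hs : Convex ℝ s) (hsc : IsCompact s)
    (hW : ∀ w ∈ s, H w = H z → W w ≠ 0) (hz : z ∈ s) :
    ∃ T, 0 < T ∧ ∀ t, φ (t + T) z = φ t z := by
  have hH : ContinuousOn H s := fun w hw => (hφ.hasGradientWithinAt w hw).continuousWithinAt
  have hcompact : IsCompact {w ∈ s | H w = H z} := hsc.of_isClosed_subset
    (hH.preimage_isClosed_of_isClosed hsc.isClosed isClosed_singleton) (sep_subset _ _)
  exact exists_period_of_isCompact hcompact (hφ.isInvariant_level _)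
    (fun w hw => hw.2 ▸ hφ.image_Ioo_mem_nhdsWithin_level hs hw.1 (hW w hw.1 hw.2)) ⟨hz, rfl⟩

theorem apply_linearIsometry (hφ : IsHamiltonianFlow φ W H s) (hs : Convex ℝ s) (h₀ : 0 ∈ s)
    {R : ℂ →ₗᵢ[ℝ] ℂ} (hR : MapsTo R s s)
    (hRW : ∀ w ∈ s, Complex.I * W (R w) = R (Complex.I * W w)) (hz : z ∈ s) :
    H (R z) = H z :=
  eq_of_hasGradientWithinAt_eq (H₁ := H ∘ R) hs
    (fun w hw => hasGradientWithinAt_comp_linearIsometry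
      (hRW w hw ▸ hφ.hasGradientWithinAt _ (hR hw)) hR)
    hφ.hasGradientWithinAt h₀ hz (by simp)

end IsHamiltonianFlow

end HamiltonianFlow

section HamiltonianFlowUnitDisc

variable {W : ℂ → ℂ} {φ : Flow ℝ ℂ} {H : ℂ → ℝ} {z : ℂ}

/-- `φ` is the flow on the closed unit disc of a Lipschitz Hamiltonian vector field `W` which is
tangent to the unit circle and vanishes at the origin only; `H` is the Hamiltonian. -/
structure IsHamiltonianDiscFlow (φ : Flow ℝ ℂ) (W : ℂ → ℂ) (H : ℂ → ℝ) : Prop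
    extends IsHamiltonianFlow φ W H (closedBall 0 1) where
  exists_lipschitzOnWith : ∃ K, LipschitzOnWith K W (closedBall 0 1)
  inner_eq_zero : ∀ z ∈ sphere 0 1, ⟪z, W z⟫ = 0
  eq_zero_iff : ∀ z ∈ closedBall 0 1, W z = 0 ↔ z = 0

theorem uniqueDiffOn_closedUnitDisc : UniqueDiffOn ℝ (closedBall (0 : ℂ) 1) :=
  uniqueDiffOn_convex (convex_closedBall _ _) (by rw [interior_closedBall _ one_ne_zero]; simp)

theorem exists_isHamiltonianDiscFlow (hW : ContDiffOn ℝ 1 W (closedBall 0 1))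
    (hdiv : ∀ z ∈ ball (0 : ℂ) 1, (fderiv ℝ W z 1).re + (fderiv ℝ W z Complex.I).im = 0)
    (htan : ∀ z ∈ sphere 0 1, ⟪z, W z⟫ = 0) (hzero : ∀ z ∈ closedBall 0 1, W z = 0 ↔ z = 0) :
    ∃ φ H, IsHamiltonianDiscFlow φ W H := by
  have hint : interior (closedBall (0 : ℂ) 1) = ball 0 1 := interior_closedBall _ one_ne_zero
  obtain ⟨K, hK⟩ := hW.exists_lipschitzOnWith one_ne_zero (convex_closedBall _ _)
    (isCompact_closedBall _ _)
  obtain ⟨φ, hφ, hinv⟩ := exists_isFlowAlong_isInvariant_unitBall hK htan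
  obtain ⟨H, hH⟩ := exists_hasGradientWithinAt_I_mul_of_divergence_eq_zero
    (convex_closedBall (0 : ℂ) 1)
    (fun z hz => (hW.differentiableOn one_ne_zero z hz).hasFDerivWithinAt)
    fun z hz => divergence_fderivWithin_eq_zero_of_fderiv hW uniqueDiffOn_closedUnitDisc
      (by rw [hint, closure_ball _ one_ne_zero]) (hint ▸ hdiv) hz
  exact ⟨φ, H, ⟨hφ, hinv, hW.continuousOn, hH⟩, ⟨K, hK⟩, htan, hzero⟩

theorem inner_I_mul_I_mul (a b : ℂ) : ⟪Complex.I * a, Complex.I * b⟫ = ⟪a, b⟫ := by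
  simp only [Complex.inner, Complex.mul_re, Complex.mul_im, Complex.conj_re, Complex.conj_im,
    Complex.I_re, Complex.I_im]
  ring

namespace IsHamiltonianDiscFlow

theorem isPreconnected_level_and_exists_region (hφ : IsHamiltonianDiscFlow φ W H)
    (hz : z ∈ closedBall 0 1) (hz₀ : z ≠ 0) :
    IsPreconnected {w ∈ closedBall 0 1 | H w = H z} ∧ ∃ U, IsOpen U ∧ (0 : ℂ) ∈ U ∧
      U ⊆ closedBall 0 1 ∧ SimplyConnectedSpace U ∧
      frontier U = {w ∈ closedBall 0 1 | H w = H z} := by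
  obtain ⟨K, hK⟩ := hφ.exists_lipschitzOnWith
  refine isPreconnected_level_and_exists_region_of_gradient (G := fun w => Complex.I * W w)
    (K := K) (.of_dist_le_mul fun x hx y hy => ?_) hφ.hasGradientWithinAt (fun w hw => ?_)
    (fun w hw => ?_) hz hz₀
  · rw [dist_eq_norm, ← mul_sub, norm_mul, Complex.norm_I, one_mul, ← dist_eq_norm]
    exact hK.dist_le_mul x hx y hy
  · rw [inner_I_mul_I_mul, real_inner_comm, hφ.inner_eq_zero w hw]
  · rw [← hφ.eq_zero_iff w hw, mul_eq_zero, or_iff_right Complex.I_ne_zero]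

theorem ne_zero_of_apply_eq (hφ : IsHamiltonianDiscFlow φ W H) (hz : z ∈ closedBall 0 1)
    (hz₀ : z ≠ 0) (w : ℂ) (hw : w ∈ closedBall 0 1) (hHw : H w = H z) : W w ≠ 0 := by
  intro hWw
  obtain ⟨-, U, hU, hU₀, -, -, hUfr⟩ := hφ.isPreconnected_level_and_exists_region hz hz₀
  have hwfr : w ∈ frontier U := hUfr ▸ ⟨hw, hHw⟩
  rw [(hφ.eq_zero_iff w hw).1 hWw, hU.frontier_eq] at hwfr
  exact hwfr.2 hU₀

theorem orbit_eq_level (hφ : IsHamiltonianDiscFlow φ W H) (hz : z ∈ closedBall 0 1)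
    (hz₀ : z ≠ 0) : φ.orbit z = {w ∈ closedBall 0 1 | H w = H z} :=
  hφ.toIsHamiltonianFlow.orbit_eq_level (convex_closedBall _ _)
    (hφ.isPreconnected_level_and_exists_region hz hz₀).1 (hφ.ne_zero_of_apply_eq hz hz₀) hz

theorem exists_period (hφ : IsHamiltonianDiscFlow φ W H) (hz : z ∈ closedBall 0 1)
    (hz₀ : z ≠ 0) : ∃ T, 0 < T ∧ ∀ t, φ (t + T) z = φ t z :=
  hφ.toIsHamiltonianFlow.exists_period (convex_closedBall _ _) (isCompact_closedBall _ _)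
    (hφ.ne_zero_of_apply_eq hz hz₀) hz

theorem exists_region (hφ : IsHamiltonianDiscFlow φ W H) (hz : z ∈ closedBall 0 1)
    (hz₀ : z ≠ 0) : ∃ U, IsOpen U ∧ (0 : ℂ) ∈ U ∧ U ⊆ closedBall 0 1 ∧ SimplyConnectedSpace U ∧
      frontier U = φ.orbit z :=
  hφ.orbit_eq_level hz hz₀ ▸ (hφ.isPreconnected_level_and_exists_region hz hz₀).2

theorem mapsTo_orbit (hφ : IsHamiltonianDiscFlow φ W H) {R : ℂ →ₗᵢ[ℝ] ℂ}
    (hRW : ∀ w ∈ closedBall 0 1, Complex.I * W (R w) = R (Complex.I * W w))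
    (hz : z ∈ closedBall 0 1) : MapsTo R (φ.orbit z) (φ.orbit z) := by
  have h₀ : (0 : ℂ) ∈ closedBall 0 1 := mem_closedBall_self zero_le_one
  have hR : MapsTo R (closedBall 0 1) (closedBall 0 1) := fun w hw => by
    rwa [mem_closedBall_zero_iff, R.norm_map, ← mem_closedBall_zero_iff]
  rcases eq_or_ne z 0 with rfl | hz₀
  · obtain ⟨K, hK⟩ := hφ.exists_lipschitzOnWith
    have hfix := hφ.isFlowAlong.apply_eq_self_of_eq_zero hφ.isInvariant.isForwardInvariant hK h₀
      ((hφ.eq_zero_iff 0 h₀).2 rfl)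
    have horbit : φ.orbit 0 = {0} := by simp [φ.orbit_eq_range, hfix]
    simp [horbit]
  · rw [hφ.orbit_eq_level hz hz₀]
    exact fun w hw => ⟨hR hw.1, (hφ.apply_linearIsometry (convex_closedBall _ _) h₀ hR hRW
      hw.1).trans hw.2⟩

end IsHamiltonianDiscFlow

end HamiltonianFlowUnitDisc

/-- for a `C¹`, divergence-free vector field on the closed unit disc, tangent to
the unit circle and vanishing only at the origin, all trajectories of the associated flow are
global and periodic, enclose a simply connected region containing the origin, the flow maps
form a one-parameter group of diffeomorphisms of the closed disc, and the orbits inherit the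
reflection and rotation symmetries of the vector field. -/
theorem hamiltonian_disc_flow (W : ℂ → ℂ)
    (hW : ContDiffOn ℝ 1 W (closedBall 0 1))
    (hdiv : ∀ z ∈ closedBall (0:ℂ) 1,
      (fderiv ℝ W z 1).re + (fderiv ℝ W z Complex.I).im = 0)
    (htan : ∀ z ∈ sphere (0:ℂ) 1, (W z * (starRingEnd ℂ) z).re = 0)
    (hzero : ∀ z ∈ closedBall (0:ℂ) 1, (W z = 0 ↔ z = 0)) :
    ∃ ψ : ℝ → ℂ → ℂ,
      -- ψ is the (globally defined) flow of W on the closed disc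
      (∀ z ∈ closedBall (0:ℂ) 1, ψ 0 z = z) ∧
      (∀ z ∈ closedBall (0:ℂ) 1, ∀ t : ℝ,
        ψ t z ∈ closedBall (0:ℂ) 1 ∧ HasDerivAt (fun s : ℝ => ψ s z) (W (ψ t z)) t) ∧
      -- (1) every trajectory off the origin is periodic and its orbit is the boundary of a
      -- simply connected open region containing the origin
      (∀ z ∈ closedBall (0:ℂ) 1, z ≠ 0 →
        ∃ T : ℝ, 0 < T ∧ (∀ t : ℝ, ψ (t + T) z = ψ t z) ∧
          ∃ U : Set ℂ, IsOpen U ∧ (0:ℂ) ∈ U ∧ U ⊆ closedBall 0 1 ∧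
            SimplyConnectedSpace ↥U ∧ frontier U = {w : ℂ | ∃ t : ℝ, ψ t z = w}) ∧
      -- (2) the maps ψ t form a one-parameter group of diffeomorphisms of the closed disc
      (∀ t : ℝ, BijOn (ψ t) (closedBall 0 1) (closedBall 0 1) ∧
        ContDiffOn ℝ 1 (ψ t) (closedBall 0 1)) ∧
      (∀ s t : ℝ, ∀ z ∈ closedBall (0:ℂ) 1, ψ (s + t) z = ψ s (ψ t z)) ∧
      -- (3) antisymmetric W: orbits are symmetric with respect to the real axis
      ((∀ z ∈ closedBall (0:ℂ) 1, (starRingEnd ℂ) (W z) = -W ((starRingEnd ℂ) z)) →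
        ∀ z ∈ closedBall (0:ℂ) 1, ∀ t : ℝ, ∃ s : ℝ, ψ s z = (starRingEnd ℂ) (ψ t z)) ∧
      -- (4) rotation-invariant W: orbits are invariant under the rotation
      (∀ θ₀ : ℝ,
        (∀ z ∈ closedBall (0:ℂ) 1,
          W (Complex.exp (θ₀ * Complex.I) * z) = Complex.exp (θ₀ * Complex.I) * W z) →
        ∀ z ∈ closedBall (0:ℂ) 1, ∀ t : ℝ,
          ∃ s : ℝ, ψ s z = Complex.exp (θ₀ * Complex.I) * ψ t z) := by
  obtain ⟨φ, H, hφ⟩ := exists_isHamiltonianDiscFlow hW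
    (fun z hz => hdiv z (ball_subset_closedBall hz)) htan hzero
  refine ⟨φ, fun z _ => φ.map_zero_apply z,
    fun z hz t => ⟨hφ.isInvariant t hz, hφ.isFlowAlong z t (hφ.isInvariant t hz)⟩,
    fun z hz hz₀ => ?_, fun t => ⟨bijOn_of_isInvariant hφ.isInvariant t, ?_⟩,
    fun s t z _ => φ.map_add s t z, fun hconj z hz t => ?_, fun θ hrot z hz t => ?_⟩
  · obtain ⟨T, hT, hper⟩ := hφ.exists_period hz hz₀
    exact ⟨T, hT, hper, hφ.exists_region hz hz₀⟩
  · exact hφ.isFlowAlong.contDiffOn_one hφ.isInvariant (isCompact_closedBall _ _)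
      (convex_closedBall _ _) uniqueDiffOn_closedUnitDisc hW t
  · refine hφ.mapsTo_orbit (R := Complex.conjLIE.toLinearIsometry) (fun w hw => ?_) hz
      (φ.mem_orbit z t)
    simp [hconj w hw]
  · refine hφ.mapsTo_orbit (R := (rotation (Circle.exp θ)).toLinearIsometry) (fun w hw => ?_) hz
      (φ.mem_orbit z t)
    simp [hrot w hw, mul_left_comm]
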